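/- arXiv:1505.06936 — 2 statements merged into one kernel-verified Lean document; each statement's English description precedes it below -/
import Mathlib

section
/- Let n ≥ 1 and let F be a Finsler function on ℝⁿ. Then (ℝⁿ, F) is rectilinear in the standard coordinates (i.e. projectively flat with respect to the identity chart) if and only if F satisfies the Hamel equations in the standard coordinates. -/
open scoped BigOperators Topology
noncomputable section

abbrev E (n : ℕ) := Fin n → ℝ

/-- Partial derivative with respect to the base coordinate `x^i`. -/
def pdx {n : ℕ} (i : Fin n) (f : E n × E n → ℝ) (p : E n × E n) : ℝ :=
  fderiv ℝ f p (Pi.single i 1, 0)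

/-- Partial derivative with respect to the fibre coordinate `y^i`. -/
def pdy {n : ℕ} (i : Fin n) (f : E n × E n → ℝ) (p : E n × E n) : ℝ :=
  fderiv ℝ f p (0, Pi.single i 1)

/-- A Finsler function on `ℝⁿ`. -/
structure IsFinsler {n : ℕ} (F : E n × E n → ℝ) : Prop where
  smooth : ContDiffOn ℝ (⊤ : ℕ∞) F {p : E n × E n | p.2 ≠ 0}
  homog : ∀ (x y : E n) (c : ℝ), 0 < c → F (x, c • y) = c * F (x, y)
  pos : ∀ (x y : E n), y ≠ 0 → 0 < F (x, y)
  posDef : ∀ (x y : E n), y ≠ 0 →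
    (Matrix.of fun i j : Fin n =>
      (1 / 2) * pdy i (pdy j (fun p => F p ^ 2)) (x, y)).PosDef

/-- A geodesic of `(ℝⁿ, F)`: a `C²` curve on a nontrivial open interval, with nowhere
vanishing velocity, positive constant speed, satisfying the Euler–Lagrange equations. -/
structure IsGeodesic {n : ℕ} (F : E n × E n → ℝ) (γ : ℝ → E n) (t₁ t₂ : ℝ) : Prop where
  lt : t₁ < t₂
  smooth : ContDiffOn ℝ 2 γ (Set.Ioo t₁ t₂)
  vel : ∀ t ∈ Set.Ioo t₁ t₂, deriv γ t ≠ 0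
  constSpeed : ∃ c : ℝ, 0 < c ∧ ∀ t ∈ Set.Ioo t₁ t₂, F (γ t, deriv γ t) = c
  eulerLagrange : ∀ (i : Fin n), ∀ t ∈ Set.Ioo t₁ t₂,
    deriv (fun s => pdy i F (γ s, deriv γ s)) t = pdx i F (γ t, deriv γ t)

/-- The Hamel equations in the standard coordinates. -/
def SatisfiesHamel {n : ℕ} (F : E n × E n → ℝ) : Prop :=
  ∀ (x y : E n), y ≠ 0 → ∀ i : Fin n,
    ∑ k, pdx k (pdy i F) (x, y) * y k = ∑ k, pdx i (pdy k F) (x, y) * y k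

/-- `(ℝⁿ, F)` is rectilinear in the standard coordinates. -/
def Rectilinear {n : ℕ} (F : E n × E n → ℝ) : Prop :=
  ∀ (γ : ℝ → E n) (t₁ t₂ : ℝ), IsGeodesic F γ t₁ t₂ →
    ∃ (f : ℝ → ℝ) (a b : E n), a ≠ 0 ∧
      ContDiffOn ℝ 2 f (Set.Ioo t₁ t₂) ∧
      (∀ t ∈ Set.Ioo t₁ t₂, 0 < deriv f t) ∧
      ∀ t ∈ Set.Ioo t₁ t₂, γ t = f t • a + b

/-!
Let `M` and `H` be the mixed Hessian `∂²F/∂x∂y` and the fibre Hessian `∂²F/∂y∂y` of `F`. Along a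
geodesic the Euler–Lagrange equations say `M γ' + H γ'' = ∂F/∂x`, while by homogeneity the Hamel
equations at `(x, y)` say `M y = ∂F/∂x`. Since `g = F • H + ∂F/∂y ⊗ ∂F/∂y` is positive definite, the
kernel of `H` is the line `ℝ y`; hence the Hamel equations hold at `(γ, γ')` exactly when `γ''` is a
multiple of `γ'`, and this happens at all times exactly when `γ` is straight. Finally a geodesic
passes through every `(x, y)` with `y ≠ 0`, because inverting `g` turns the Euler–Lagrange equations
into an explicit second-order ODE.
-/

section StraightCurves

variable {V : Type*} [NormedAddCommGroup V] [NormedSpace ℝ V] {γ u : ℝ → V} {s : Set ℝ} {t : ℝ}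

/-- During `s` the curve `γ` runs along an affine line without stopping or turning back; this is the
conclusion of `Rectilinear` for a single curve. -/
def IsStraightOn (γ : ℝ → V) (s : Set ℝ) : Prop :=
  ∃ (f : ℝ → ℝ) (a b : V), a ≠ 0 ∧ ContDiffOn ℝ 2 f s ∧
    (∀ t ∈ s, 0 < deriv f t) ∧ ∀ t ∈ s, γ t = f t • a + b

lemma hasDerivAt_of_contDiffOn_two (hs : IsOpen s) (hγ : ContDiffOn ℝ 2 γ s) (ht : t ∈ s) :
    HasDerivAt γ (deriv γ t) t :=
  ((hγ.differentiableOn two_ne_zero).differentiableAt (hs.mem_nhds ht)).hasDerivAt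

lemma hasDerivAt_deriv_of_contDiffOn_two (hs : IsOpen s) (hγ : ContDiffOn ℝ 2 γ s) (ht : t ∈ s) :
    HasDerivAt (deriv γ) (deriv (deriv γ) t) t := by
  rw [← one_add_one_eq_two, contDiffOn_succ_iff_deriv_of_isOpen hs] at hγ
  exact ((hγ.2.2.differentiableOn one_ne_zero).differentiableAt (hs.mem_nhds ht)).hasDerivAt

lemma contDiffOn_two_of_hasDerivAt {g : ℝ → V} (hs : IsOpen s) (hγ : DifferentiableOn ℝ γ s)
    (hγ' : ∀ t ∈ s, HasDerivAt (deriv γ) (g t) t) (hg : ContinuousOn g s) :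
    ContDiffOn ℝ 2 γ s := by
  rw [← one_add_one_eq_two, contDiffOn_succ_iff_deriv_of_isOpen hs, ← zero_add (1 : WithTop ℕ∞),
    contDiffOn_succ_iff_deriv_of_isOpen hs, contDiffOn_zero]
  exact ⟨hγ, by simp, fun t ht => (hγ' t ht).differentiableAt.differentiableWithinAt, by simp,
    hg.congr fun t ht => (hγ' t ht).deriv⟩

lemma eq_of_hasDerivAt_zero (hs : IsOpen s) (hs' : IsPreconnected s)
    (hu : ∀ t ∈ s, HasDerivAt u 0 t) {t₀ : ℝ} (ht₀ : t₀ ∈ s) (ht : t ∈ s) : u t = u t₀ :=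
  hs.is_const_of_deriv_eq_zero hs'
    (fun r hr => (hu r hr).differentiableAt.differentiableWithinAt)
    (fun r hr => (hu r hr).deriv) ht ht₀

lemma hasDerivAt_inv_apply_smul_self_zero {c : ℝ} (φ : V →L[ℝ] ℝ) (hu : HasDerivAt u (c • u t) t)
    (hφ : φ (u t) ≠ 0) : HasDerivAt (fun r => (φ (u r))⁻¹ • u r) 0 t := by
  have h := ((φ.hasFDerivAt.comp_hasDerivAt t hu).fun_inv hφ).smul hu
  refine h.congr_deriv ?_
  simp only [Function.comp_apply, map_smul, smul_eq_mul, smul_smul, ← add_smul]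
  rw [show (φ (u t))⁻¹ * c + -(c * φ (u t)) / φ (u t) ^ 2 = 0 by field_simp; ring, zero_smul]

lemma eventually_inv_norm_smul_eq (hs : IsOpen s)
    (hu : ∀ t ∈ s, ∃ c : ℝ, HasDerivAt u (c • u t) t) (ht : t ∈ s) (hut : u t ≠ 0) :
    ∀ᶠ r in 𝓝 t, ‖u r‖⁻¹ • u r = ‖u t‖⁻¹ • u t := by
  -- The norm need not be differentiable; a functional norming `u t` replaces it near `t`.
  obtain ⟨φ, -, hφ⟩ := exists_dual_vector ℝ (u t) (norm_ne_zero_iff.2 hut)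
  have hφt : 0 < φ (u t) := by rw [hφ]; exact norm_pos_iff.2 hut
  have hcont : ContinuousAt (fun r => φ (u r)) t :=
    φ.continuous.continuousAt.comp (hu t ht).choose_spec.continuousAt
  obtain ⟨ε, hε, hball⟩ := Metric.eventually_nhds_iff_ball.1
    ((hs.eventually_mem ht).and (hcont.eventually_const_lt hφt))
  filter_upwards [Metric.ball_mem_nhds t hε] with r hr
  have hconst : (φ (u r))⁻¹ • u r = (φ (u t))⁻¹ • u t :=
    eq_of_hasDerivAt_zero Metric.isOpen_ball (convex_ball t ε).isPreconnected
      (fun q hq => hasDerivAt_inv_apply_smul_self_zero φ (hu q (hball q hq).1).choose_spec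
        (hball q hq).2.ne') (Metric.mem_ball_self hε) hr
  have hφr := (hball r hr).2
  have hur : u r ≠ 0 := fun h => hφr.ne' (by rw [h, map_zero])
  exact (sameRay_iff_inv_norm_smul_eq_of_ne hur hut).1
    (.inr (.inr ⟨_, _, inv_pos.2 hφr, inv_pos.2 hφt, hconst⟩))

lemma exists_eq_norm_smul_of_deriv_parallel (hs : IsOpen s) (hs' : IsPreconnected s)
    (hne : s.Nonempty) (hu : ∀ t ∈ s, ∃ c : ℝ, HasDerivAt u (c • u t) t)
    (hu0 : ∀ t ∈ s, u t ≠ 0) : ∃ a : V, a ≠ 0 ∧ ∀ t ∈ s, u t = ‖u t‖ • a := by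
  obtain ⟨t₀, ht₀⟩ := hne
  refine ⟨‖u t₀‖⁻¹ • u t₀,
    smul_ne_zero (inv_ne_zero (norm_ne_zero_iff.2 (hu0 t₀ ht₀))) (hu0 t₀ ht₀), fun t ht => ?_⟩
  have hdir : ∀ t ∈ s, HasDerivAt (fun r => ‖u r‖⁻¹ • u r) 0 t := fun t ht =>
    (hasDerivAt_const t (‖u t‖⁻¹ • u t)).congr_of_eventuallyEq
      (eventually_inv_norm_smul_eq hs hu ht (hu0 t ht))
  rw [← eq_of_hasDerivAt_zero hs hs' hdir ht₀ ht,
    smul_inv_smul₀ (norm_ne_zero_iff.2 (hu0 t ht))]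

lemma isStraightOn_of_deriv_eq_smul {k : ℝ → ℝ} {a : V} (hs : IsOpen s) (hs' : IsPreconnected s)
    (hne : s.Nonempty) (hγ : ContDiffOn ℝ 2 γ s) (ha : a ≠ 0) (hk : ∀ t ∈ s, 0 < k t)
    (hγ' : ∀ t ∈ s, deriv γ t = k t • a) : IsStraightOn γ s := by
  obtain ⟨t₀, ht₀⟩ := hne
  obtain ⟨ψ, hψ⟩ := SeparatingDual.exists_eq_one (R := ℝ) ha
  have hf : ∀ t ∈ s, HasDerivAt (fun r => ψ (γ r)) (k t) t := fun t ht =>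
    (ψ.hasFDerivAt.comp_hasDerivAt t (hasDerivAt_of_contDiffOn_two hs hγ ht)).congr_deriv
      (by rw [hγ' t ht, map_smul, hψ, smul_eq_mul, mul_one])
  refine ⟨fun t => ψ (γ t), a, γ t₀ - ψ (γ t₀) • a, ha, ψ.contDiff.comp_contDiffOn hγ,
    fun t ht => (hf t ht).deriv ▸ hk t ht, fun t ht => ?_⟩
  have hconst : γ t - ψ (γ t) • a = γ t₀ - ψ (γ t₀) • a := by
    refine eq_of_hasDerivAt_zero (u := fun t => γ t - ψ (γ t) • a) hs hs' (fun r hr => ?_) ht₀ ht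
    have h := (hasDerivAt_of_contDiffOn_two hs hγ hr).sub ((hf r hr).smul_const a)
    rwa [hγ' r hr, sub_self] at h
  rw [← hconst, add_sub_cancel]

lemma IsStraightOn.exists_deriv_deriv_eq_smul (h : IsStraightOn γ s) (hs : IsOpen s) (ht : t ∈ s) :
    ∃ c : ℝ, deriv (deriv γ) t = c • deriv γ t := by
  obtain ⟨f, a, b, -, hf, hf', hγ⟩ := h
  have hvel : ∀ r ∈ s, deriv γ r = deriv f r • a := fun r hr =>
    (((hasDerivAt_of_contDiffOn_two hs hf hr).smul_const a).add_const b
      |>.congr_of_eventuallyEq (Filter.eventuallyEq_of_mem (hs.mem_nhds hr) hγ)).deriv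
  have hacc : deriv (deriv γ) t = deriv (deriv f) t • a :=
    ((hasDerivAt_deriv_of_contDiffOn_two hs hf ht).smul_const a
      |>.congr_of_eventuallyEq (Filter.eventuallyEq_of_mem (hs.mem_nhds ht) hvel)).deriv
  refine ⟨deriv (deriv f) t / deriv f t, ?_⟩
  rw [hacc, hvel t ht, smul_smul, div_mul_cancel₀ _ (hf' t ht).ne']

theorem isStraightOn_iff_forall_deriv_deriv_eq_smul (hs : IsOpen s) (hs' : IsPreconnected s)
    (hne : s.Nonempty) (hγ : ContDiffOn ℝ 2 γ s) (hvel : ∀ t ∈ s, deriv γ t ≠ 0) :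
    IsStraightOn γ s ↔ ∀ t ∈ s, ∃ c : ℝ, deriv (deriv γ) t = c • deriv γ t := by
  refine ⟨fun h t ht => h.exists_deriv_deriv_eq_smul hs ht, fun h => ?_⟩
  obtain ⟨a, ha, hγ'⟩ := exists_eq_norm_smul_of_deriv_parallel hs hs' hne
    (fun t ht => (h t ht).imp fun _ hc => hc ▸ (hasDerivAt_deriv_of_contDiffOn_two hs hγ ht)) hvel
  exact isStraightOn_of_deriv_eq_smul hs hs' hne hγ ha
    (fun t ht => norm_pos_iff.2 (hvel t ht)) hγ'

theorem exists_hasDerivAt_deriv_of_contDiffAt [CompleteSpace V] {G : V × V → V} {p : V × V}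
    {U : Set (V × V)} (hG : ContDiffAt ℝ 1 G p) (hU : U ∈ 𝓝 p) :
    ∃ (γ : ℝ → V) (ε : ℝ), 0 < ε ∧ (γ 0, deriv γ 0) = p ∧
      ∀ t ∈ Set.Ioo (-ε) ε, (γ t, deriv γ t) ∈ U ∧ HasDerivAt γ (deriv γ t) t ∧
        HasDerivAt (deriv γ) (G (γ t, deriv γ t)) t := by
  obtain ⟨α, hα0, ε₀, hε₀, hα⟩ := (contDiffAt_snd.prodMk hG)
    |>.exists_forall_mem_closedBall_exists_eq_forall_mem_Ioo_hasDerivAt₀ 0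
  have hαU : ∀ᶠ t in 𝓝 0, α t ∈ U :=
    (hα 0 (by simpa using hε₀)).continuousAt.preimage_mem_nhds (by rwa [hα0])
  obtain ⟨ε, hε, h⟩ := Metric.eventually_nhds_iff_ball.1
    (hαU.and (isOpen_Ioo.eventually_mem (show (0 : ℝ) ∈ Set.Ioo (0 - ε₀) (0 + ε₀) by
      simpa using hε₀)))
  rw [Real.ball_zero_eq_Ioo] at h
  have hfst : ∀ t ∈ Set.Ioo (-ε) ε, HasDerivAt (fun r => (α r).1) (α t).2 t := fun t ht =>
    (hasFDerivAt_fst (𝕜 := ℝ) (p := α t)).comp_hasDerivAt t (hα t (h t ht).2)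
  have hvel : Set.EqOn (deriv fun r => (α r).1) (fun r => (α r).2) (Set.Ioo (-ε) ε) :=
    fun t ht => (hfst t ht).deriv
  have hsnd : ∀ t ∈ Set.Ioo (-ε) ε, HasDerivAt (deriv fun r => (α r).1) (G (α t)) t :=
    fun t ht => ((hasFDerivAt_snd (𝕜 := ℝ) (p := α t)).comp_hasDerivAt t
      (hα t (h t ht).2)).congr_of_eventuallyEq (hvel.eventuallyEq_of_mem (isOpen_Ioo.mem_nhds ht))
  refine ⟨fun r => (α r).1, ε, hε, by rw [hvel (by simpa using hε), Prod.mk.eta, hα0],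
    fun t ht => ?_⟩
  rw [hvel ht]
  exact ⟨(h t ht).1, hfst t ht, hsnd t ht⟩

end StraightCurves

section MatrixSmoothness

variable {𝕜 V ι : Type*} [NontriviallyNormedField 𝕜] [NormedAddCommGroup V] [NormedSpace 𝕜 V]
  [Fintype ι] [DecidableEq ι] {k : WithTop ℕ∞} {M : V → Matrix ι ι 𝕜} {p : V}

lemma contDiffAt_matrix_det (hM : ∀ i j, ContDiffAt 𝕜 k (fun q => M q i j) p) :
    ContDiffAt 𝕜 k (fun q => (M q).det) p := by
  simp only [Matrix.det_apply']
  exact .sum fun σ _ => contDiffAt_const.mul (contDiffAt_prod fun i _ => hM _ _)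

lemma contDiffAt_matrix_inv (hM : ∀ i j, ContDiffAt 𝕜 k (fun q => M q i j) p)
    (hdet : (M p).det ≠ 0) (i j : ι) : ContDiffAt 𝕜 k (fun q => (M q)⁻¹ i j) p := by
  simp only [Matrix.inv_def, Ring.inverse_eq_inv', Matrix.smul_apply, smul_eq_mul,
    Matrix.adjugate_apply]
  refine ((contDiffAt_matrix_det hM).inv hdet).mul (contDiffAt_matrix_det fun a b => ?_)
  simp only [Matrix.updateRow_apply]
  split_ifs
  exacts [contDiffAt_const, hM a b]

end MatrixSmoothness

section PartialDerivatives

open scoped Matrix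

variable {n : ℕ} {F : E n × E n → ℝ} {p : E n × E n} {t : ℝ}

/-- The gradient `(∂F/∂x^i)_i` in the base variables. -/
def gradX (F : E n × E n → ℝ) (p : E n × E n) : E n := fun i => pdx i F p

/-- The gradient `(∂F/∂y^i)_i` in the fibre variables, i.e. the momentum of the Lagrangian `F`. -/
def gradY (F : E n × E n → ℝ) (p : E n × E n) : E n := fun i => pdy i F p

/-- The mixed Hessian; the row index is the fibre variable: entry `(i, k)` is
`∂²F/∂x^k∂y^i`. -/
def hessYX (F : E n × E n → ℝ) (p : E n × E n) : Matrix (Fin n) (Fin n) ℝ :=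
  Matrix.of fun i => gradX (pdy i F) p

/-- The fibre Hessian, with entries `∂²F/∂y^k∂y^i`. -/
def hessYY (F : E n × E n → ℝ) (p : E n × E n) : Matrix (Fin n) (Fin n) ℝ :=
  Matrix.of fun i => gradY (pdy i F) p

/-- The fundamental tensor `g_{ij} = ½ ∂²(F²)/∂y^i∂y^j` of a Finsler function. -/
def fundamentalTensor (F : E n × E n → ℝ) (p : E n × E n) : Matrix (Fin n) (Fin n) ℝ :=
  Matrix.of fun i j => (1 / 2) * pdy i (pdy j fun q => F q ^ 2) p

lemma fderiv_apply_eq_gradX_add_gradY (F : E n × E n → ℝ) (p w : E n × E n) :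
    fderiv ℝ F p w = gradX F p ⬝ᵥ w.1 + gradY F p ⬝ᵥ w.2 := by
  have happly (L : E n →L[ℝ] ℝ) (v : E n) : L v = (fun i => L (Pi.single i 1)) ⬝ᵥ v := by
    conv_lhs => rw [← (Pi.basisFun ℝ (Fin n)).sum_repr v]
    simp [dotProduct, mul_comm]
  have hw : w = (w.1, 0) + (0, w.2) := by simp
  conv_lhs => rw [hw, map_add]
  exact congrArg₂ (· + ·) (happly (fderiv ℝ F p ∘L .inl ℝ (E n) (E n)) w.1)
    (happly (fderiv ℝ F p ∘L .inr ℝ (E n) (E n)) w.2)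

lemma hasDerivAt_comp_prodMk {γ η : ℝ → E n} {u v : E n}
    (hF : DifferentiableAt ℝ F (γ t, η t)) (hγ : HasDerivAt γ u t) (hη : HasDerivAt η v t) :
    HasDerivAt (fun s => F (γ s, η s))
      (gradX F (γ t, η t) ⬝ᵥ u + gradY F (γ t, η t) ⬝ᵥ v) t := by
  rw [← fderiv_apply_eq_gradX_add_gradY F _ (u, v)]
  exact hF.hasFDerivAt.comp_hasDerivAt t (hγ.prodMk hη)

variable {k m : WithTop ℕ∞}

lemma contDiffAt_pdx (hF : ContDiffAt ℝ k F p) (hm : m + 1 ≤ k) (i : Fin n) :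
    ContDiffAt ℝ m (pdx i F) p :=
  (hF.fderiv_right hm).clm_apply contDiffAt_const

lemma contDiffAt_pdy (hF : ContDiffAt ℝ k F p) (hm : m + 1 ≤ k) (i : Fin n) :
    ContDiffAt ℝ m (pdy i F) p :=
  (hF.fderiv_right hm).clm_apply contDiffAt_const

lemma differentiableAt_pdy (hF : ContDiffAt ℝ 2 F p) (i : Fin n) :
    DifferentiableAt ℝ (pdy i F) p :=
  (contDiffAt_pdy hF one_add_one_eq_two.le i).differentiableAt one_ne_zero

lemma eventually_differentiableAt (hF : ContDiffAt ℝ 2 F p) :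
    ∀ᶠ q in 𝓝 p, DifferentiableAt ℝ F q :=
  (hF.eventually (by simp)).mono fun _ hq => hq.differentiableAt two_ne_zero

lemma pdy_pdy_comm (hF : ContDiffAt ℝ 2 F p) (i j : Fin n) :
    pdy i (pdy j F) p = pdy j (pdy i F) p := by
  have hF' : DifferentiableAt ℝ (fderiv ℝ F) p :=
    (hF.fderiv_right one_add_one_eq_two.le).differentiableAt one_ne_zero
  have hpdy (i j : Fin n) : pdy i (pdy j F) p =
      fderiv ℝ (fderiv ℝ F) p (0, Pi.single i 1) (0, Pi.single j 1) := by
    have h := (hF'.hasFDerivAt.clm_apply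
      (hasFDerivAt_const ((0, Pi.single j 1) : E n × E n) p)).fderiv
    refine (congrArg (· (0, Pi.single i 1)) h).trans ?_
    simp
  rw [hpdy, hpdy]
  exact (hF.isSymmSndFDerivAt (by simp)).eq _ _

lemma pdy_sq (hF : DifferentiableAt ℝ F p) (j : Fin n) :
    pdy j (fun q => F q ^ 2) p = 2 * F p * pdy j F p := by
  simp [pdy, (hF.hasFDerivAt.pow 2).fderiv]

lemma fundamentalTensor_eq (hF : ContDiffAt ℝ 2 F p) :
    fundamentalTensor F p = F p • hessYY F p + Matrix.vecMulVec (gradY F p) (gradY F p) := by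
  ext i j
  have hdiff := eventually_differentiableAt hF
  have hsq : pdy j (fun q => F q ^ 2) =ᶠ[𝓝 p] fun q => 2 * F q * pdy j F q :=
    hdiff.mono fun q hq => pdy_sq hq j
  have hprod := (hdiff.self_of_nhds.hasFDerivAt.const_mul 2).mul
    (differentiableAt_pdy hF j).hasFDerivAt
  have hpdy : pdy i (pdy j fun q => F q ^ 2) p =
      2 * (F p * pdy i (pdy j F) p + pdy i F p * pdy j F p) := by
    refine (congrArg (· (0, Pi.single i 1)) (hprod.congr_of_eventuallyEq hsq).fderiv).trans ?_
    simp only [pdy, FunLike.coe_add, Pi.add_apply, FunLike.coe_smul, Pi.smul_apply, smul_eq_mul]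
    ring
  simp only [fundamentalTensor, hpdy, hessYY, gradY, Matrix.of_apply, Matrix.add_apply,
    Matrix.smul_apply, Matrix.vecMulVec_apply, smul_eq_mul, pdy_pdy_comm hF j i]
  ring

lemma fundamentalTensor_mulVec (hF : ContDiffAt ℝ 2 F p) (v : E n) :
    fundamentalTensor F p *ᵥ v = F p • hessYY F p *ᵥ v + (gradY F p ⬝ᵥ v) • gradY F p := by
  rw [fundamentalTensor_eq hF, Matrix.add_mulVec, Matrix.smul_mulVec, Matrix.vecMulVec_mulVec,
    op_smul_eq_smul]

end PartialDerivatives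

/-- Positive homogeneity of degree one in the fibre variable. -/
def IsFiberHomogeneous {n : ℕ} (F : E n × E n → ℝ) : Prop :=
  ∀ (x y : E n) (c : ℝ), 0 < c → F (x, c • y) = c * F (x, y)

namespace IsFiberHomogeneous

open scoped Matrix

variable {n : ℕ} {F : E n × E n → ℝ} {p : E n × E n}

lemma gradY_dotProduct_self (hhom : IsFiberHomogeneous F) (hF : DifferentiableAt ℝ F p) :
    gradY F p ⬝ᵥ p.2 = F p := by
  have hray : HasDerivAt (fun s : ℝ => s • p.2) p.2 1 := by
    simpa using (hasDerivAt_id (1 : ℝ)).smul_const p.2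
  have hchain := hasDerivAt_comp_prodMk (F := F) (t := 1) (by simpa using hF)
    (hasDerivAt_const 1 p.1) hray
  have hlin : HasDerivAt (fun s : ℝ => F (p.1, s • p.2)) (F p) 1 := by
    refine (by simpa using (hasDerivAt_id (1 : ℝ)).mul_const (F p) :
      HasDerivAt (fun s : ℝ => s * F p) (F p) 1).congr_of_eventuallyEq ?_
    filter_upwards [lt_mem_nhds (zero_lt_one (α := ℝ))] with s hs using hhom p.1 p.2 s hs
  simpa using hchain.unique hlin

lemma self_dotProduct_fderiv_pdy (hhom : IsFiberHomogeneous F) (hF : ContDiffAt ℝ 2 F p)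
    (w : E n × E n) :
    p.2 ⬝ᵥ (fun i => fderiv ℝ (pdy i F) p w) = gradX F p ⬝ᵥ w.1 := by
  have hdiff := eventually_differentiableAt hF
  have heuler : F =ᶠ[𝓝 p] fun q => ∑ i, pdy i F q * q.2 i :=
    hdiff.mono fun q hq => (hhom.gradY_dotProduct_self hq).symm
  have hsum : HasFDerivAt (fun q : E n × E n => ∑ i, pdy i F q * q.2 i)
      (∑ i, (pdy i F p • (.proj i ∘L .snd ℝ (E n) (E n)) + p.2 i • fderiv ℝ (pdy i F) p)) p :=
    .fun_sum fun i _ => (differentiableAt_pdy hF i).hasFDerivAt.mul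
      (ContinuousLinearMap.proj (R := ℝ) (φ := fun _ : Fin n => ℝ) i ∘L
        .snd ℝ (E n) (E n)).hasFDerivAt
  have h : fderiv ℝ F p w = gradY F p ⬝ᵥ w.2 + p.2 ⬝ᵥ fun i => fderiv ℝ (pdy i F) p w := by
    rw [(hsum.congr_of_eventuallyEq heuler).fderiv]
    simp [dotProduct, gradY, Finset.sum_add_distrib]
  linarith [fderiv_apply_eq_gradX_add_gradY F p w]

lemma self_vecMul_hessYX (hhom : IsFiberHomogeneous F) (hF : ContDiffAt ℝ 2 F p) :
    p.2 ᵥ* hessYX F p = gradX F p := by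
  ext k
  exact (hhom.self_dotProduct_fderiv_pdy hF (Pi.single k 1, 0)).trans (by simp)

lemma self_vecMul_hessYY (hhom : IsFiberHomogeneous F) (hF : ContDiffAt ℝ 2 F p) :
    p.2 ᵥ* hessYY F p = 0 := by
  ext k
  exact (hhom.self_dotProduct_fderiv_pdy hF (0, Pi.single k 1)).trans (by simp)

lemma hessYY_mulVec_self (hhom : IsFiberHomogeneous F) (hF : ContDiffAt ℝ 2 F p) :
    hessYY F p *ᵥ p.2 = 0 := by
  have hsymm : (hessYY F p)ᵀ = hessYY F p := Matrix.ext fun i j => pdy_pdy_comm hF i j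
  rw [← hsymm, Matrix.mulVec_transpose, hhom.self_vecMul_hessYY hF]

end IsFiberHomogeneous

/-- The acceleration at position `p.1` and velocity `p.2` of the geodesics of `F`. Writing `H`, `M`
for the fibre and mixed Hessians, it is the solution `z` of the combination
`F • (M y + H z) + (∂ₓF · y + ∂ᵧF · z) • ∂ᵧF = F • ∂ₓF` of the Euler–Lagrange equations with the
constant-speed condition, in which `z` has the invertible coefficient `g = F • H + ∂ᵧF ⊗ ∂ᵧF`. -/
def geodesicAcceleration {n : ℕ} (F : E n × E n → ℝ) (p : E n × E n) : E n :=
  (fundamentalTensor F p)⁻¹.mulVec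
    (F p • (gradX F p - (hessYX F p).mulVec p.2) - (gradX F p ⬝ᵥ p.2) • gradY F p)

namespace IsFinsler

open scoped Matrix

variable {n : ℕ} {F : E n × E n → ℝ} {p : E n × E n}

lemma contDiffAt (hF : IsFinsler F) (hp : p.2 ≠ 0) (k : ℕ∞) : ContDiffAt ℝ k F p :=
  (hF.smooth.contDiffAt ((isOpen_ne.preimage continuous_snd).mem_nhds hp)).of_le
    (by exact_mod_cast le_top)

lemma isUnit_fundamentalTensor (hF : IsFinsler F) (hp : p.2 ≠ 0) :
    IsUnit (fundamentalTensor F p) :=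
  (hF.posDef p.1 p.2 hp).isUnit

lemma hessYY_mulVec_eq_zero_iff (hF : IsFinsler F) (hp : p.2 ≠ 0) {v : E n} :
    hessYY F p *ᵥ v = 0 ↔ ∃ c : ℝ, v = c • p.2 := by
  have hF2 : ContDiffAt ℝ 2 F p := hF.contDiffAt hp 2
  have hker := IsFiberHomogeneous.hessYY_mulVec_self hF.homog hF2
  constructor
  · intro hv
    refine ⟨(gradY F p ⬝ᵥ v) / F p,
      Matrix.mulVec_injective_iff_isUnit.2 (hF.isUnit_fundamentalTensor hp) ?_⟩
    simp only [fundamentalTensor_mulVec hF2, Matrix.mulVec_smul, hker, hv, dotProduct_smul,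
      IsFiberHomogeneous.gradY_dotProduct_self hF.homog (hF2.differentiableAt two_ne_zero),
      smul_zero, smul_eq_mul, div_mul_cancel₀ _ (hF.pos p.1 p.2 hp).ne']
  · rintro ⟨c, rfl⟩
    rw [Matrix.mulVec_smul, hker, smul_zero]

lemma fundamentalTensor_mulVec_geodesicAcceleration (hF : IsFinsler F) (hp : p.2 ≠ 0) :
    fundamentalTensor F p *ᵥ geodesicAcceleration F p =
      F p • (gradX F p - hessYX F p *ᵥ p.2) - (gradX F p ⬝ᵥ p.2) • gradY F p := by
  rw [geodesicAcceleration, Matrix.mulVec_mulVec, Matrix.mul_nonsing_inv _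
    ((Matrix.isUnit_iff_isUnit_det _).1 (hF.isUnit_fundamentalTensor hp)), Matrix.one_mulVec]

lemma gradX_dotProduct_add_gradY_dotProduct_geodesicAcceleration (hF : IsFinsler F)
    (hp : p.2 ≠ 0) : gradX F p ⬝ᵥ p.2 + gradY F p ⬝ᵥ geodesicAcceleration F p = 0 := by
  have hF2 : ContDiffAt ℝ 2 F p := hF.contDiffAt hp 2
  have heuler : p.2 ⬝ᵥ gradY F p = F p := by
    rw [dotProduct_comm]
    exact IsFiberHomogeneous.gradY_dotProduct_self hF.homog (hF2.differentiableAt two_ne_zero)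
  have hcontract := congrArg (p.2 ⬝ᵥ ·) (hF.fundamentalTensor_mulVec_geodesicAcceleration hp)
  simp only [fundamentalTensor_mulVec hF2, dotProduct_add, dotProduct_sub, dotProduct_smul,
    Matrix.dotProduct_mulVec, IsFiberHomogeneous.self_vecMul_hessYX hF.homog hF2,
    IsFiberHomogeneous.self_vecMul_hessYY hF.homog hF2, zero_dotProduct, heuler,
    dotProduct_comm p.2 (gradX F p), smul_eq_mul] at hcontract
  refine (mul_eq_zero.1 (?_ : F p * _ = 0)).resolve_left (hF.pos p.1 p.2 hp).ne'
  linear_combination hcontract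

lemma hessYX_mulVec_add_hessYY_mulVec_geodesicAcceleration (hF : IsFinsler F) (hp : p.2 ≠ 0) :
    hessYX F p *ᵥ p.2 + hessYY F p *ᵥ geodesicAcceleration F p = gradX F p := by
  have hdef := hF.fundamentalTensor_mulVec_geodesicAcceleration hp
  rw [fundamentalTensor_mulVec (hF.contDiffAt hp 2)] at hdef
  have hspeed := hF.gradX_dotProduct_add_gradY_dotProduct_geodesicAcceleration hp
  have hpos : F p ≠ 0 := (hF.pos p.1 p.2 hp).ne'
  refine smul_right_injective _ hpos ?_
  linear_combination (norm := module) hdef - hspeed • gradY F p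

lemma contDiffAt_geodesicAcceleration (hF : IsFinsler F) (hp : p.2 ≠ 0) :
    ContDiffAt ℝ 1 (geodesicAcceleration F) p := by
  have hF3 : ContDiffAt ℝ 3 F p := hF.contDiffAt hp 3
  have h12 : (1 : WithTop ℕ∞) + 1 ≤ 2 := one_add_one_eq_two.le
  have h23 : (2 : WithTop ℕ∞) + 1 ≤ 3 := two_add_one_eq_three.le
  have hF1 : ContDiffAt ℝ 1 F p := hF.contDiffAt hp 1
  have hF2 : ContDiffAt ℝ 2 F p := hF.contDiffAt hp 2
  have hX (i : Fin n) : ContDiffAt ℝ 1 (pdx i F) p := contDiffAt_pdx hF2 h12 i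
  have hY (i : Fin n) : ContDiffAt ℝ 1 (pdy i F) p := contDiffAt_pdy hF2 h12 i
  have hYX (i k : Fin n) : ContDiffAt ℝ 1 (pdx k (pdy i F)) p :=
    contDiffAt_pdx (contDiffAt_pdy hF3 h23 i) h12 k
  have hy (k : Fin n) : ContDiffAt ℝ 1 (fun q : E n × E n => q.2 k) p :=
    contDiffAt_pi.1 contDiffAt_snd k
  have hg (i j : Fin n) : ContDiffAt ℝ 1 (fun q => fundamentalTensor F q i j) p :=
    contDiffAt_const.mul (contDiffAt_pdy (contDiffAt_pdy (hF3.pow 2) h23 j) h12 i)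
  refine contDiffAt_pi.2 fun i => ?_
  change ContDiffAt ℝ 1 (fun q => ∑ j, (fundamentalTensor F q)⁻¹ i j *
    (F q * (pdx j F q - ∑ k, pdx k (pdy j F) q * q.2 k) -
      (∑ k, pdx k F q * q.2 k) * pdy j F q)) p
  refine .sum fun j _ =>
    (contDiffAt_matrix_inv hg (hF.posDef p.1 p.2 hp).det_pos.ne' i j).mul (.sub ?_ ?_)
  · exact hF1.mul ((hX j).sub (.sum fun k _ => (hYX j k).mul (hy k)))
  · exact (ContDiffAt.sum fun k _ => (hX k).mul (hy k)).mul (hY j)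

lemma isGeodesic_of_hasDerivAt (hF : IsFinsler F) {γ : ℝ → E n} {t₁ t₂ : ℝ} (hlt : t₁ < t₂)
    (hvel : ∀ t ∈ Set.Ioo t₁ t₂, deriv γ t ≠ 0)
    (hγ : ∀ t ∈ Set.Ioo t₁ t₂, HasDerivAt γ (deriv γ t) t)
    (hγ' : ∀ t ∈ Set.Ioo t₁ t₂,
      HasDerivAt (deriv γ) (geodesicAcceleration F (γ t, deriv γ t)) t) :
    IsGeodesic F γ t₁ t₂ where
  lt := hlt
  smooth := by
    refine contDiffOn_two_of_hasDerivAt isOpen_Ioo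
      (fun t ht => (hγ t ht).differentiableAt.differentiableWithinAt) hγ' fun t ht => ?_
    exact ((hF.contDiffAt_geodesicAcceleration (p := (γ t, deriv γ t)) (hvel t ht)).continuousAt
      |>.comp (f := fun s => (γ s, deriv γ s))
        ((hγ t ht).continuousAt.prodMk (hγ' t ht).continuousAt)).continuousWithinAt
  vel := hvel
  constSpeed := by
    have hspeed : ∀ t ∈ Set.Ioo t₁ t₂, HasDerivAt (fun s => F (γ s, deriv γ s)) 0 t :=
      fun t ht => by
        rw [← hF.gradX_dotProduct_add_gradY_dotProduct_geodesicAcceleration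
          (p := (γ t, deriv γ t)) (hvel t ht)]
        exact hasDerivAt_comp_prodMk
          ((hF.contDiffAt (hvel t ht) 1).differentiableAt one_ne_zero) (hγ t ht) (hγ' t ht)
    obtain ⟨t₀, ht₀⟩ := Set.nonempty_Ioo.2 hlt
    exact ⟨F (γ t₀, deriv γ t₀), hF.pos _ _ (hvel t₀ ht₀), fun t ht =>
      eq_of_hasDerivAt_zero isOpen_Ioo isPreconnected_Ioo hspeed ht₀ ht⟩
  eulerLagrange i t ht :=
    (hasDerivAt_comp_prodMk (differentiableAt_pdy (hF.contDiffAt (hvel t ht) 2) i)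
      (hγ t ht) (hγ' t ht)).deriv.trans
      (congrFun (hF.hessYX_mulVec_add_hessYY_mulVec_geodesicAcceleration (hvel t ht)) i)

theorem exists_isGeodesic (hF : IsFinsler F) (hp : p.2 ≠ 0) :
    ∃ (γ : ℝ → E n) (ε : ℝ), 0 < ε ∧ (γ 0, deriv γ 0) = p ∧ IsGeodesic F γ (-ε) ε := by
  obtain ⟨γ, ε, hε, h0, h⟩ := exists_hasDerivAt_deriv_of_contDiffAt
    (hF.contDiffAt_geodesicAcceleration hp) ((isOpen_ne.preimage continuous_snd).mem_nhds hp)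
  exact ⟨γ, ε, hε, h0, hF.isGeodesic_of_hasDerivAt (neg_lt_self hε) (fun t ht => (h t ht).1)
    (fun t ht => (h t ht).2.1) fun t ht => (h t ht).2.2⟩

lemma satisfiesHamel_iff (hF : IsFinsler F) :
    SatisfiesHamel F ↔ ∀ p : E n × E n, p.2 ≠ 0 → hessYX F p *ᵥ p.2 = gradX F p := by
  have hrhs {p : E n × E n} (hp : p.2 ≠ 0) (i : Fin n) :
      ∑ k, pdx i (pdy k F) p * p.2 k = gradX F p i := by
    rw [← IsFiberHomogeneous.self_vecMul_hessYX hF.homog (hF.contDiffAt hp 2)]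
    exact Finset.sum_congr rfl fun k _ => mul_comm _ _
  exact ⟨fun h p hp => funext fun i => (h p.1 p.2 hp i).trans (hrhs hp i),
    fun h x y hy i => (congrFun (h (x, y) hy) i).trans (hrhs (p := (x, y)) hy i).symm⟩

end IsFinsler

namespace IsGeodesic

open scoped Matrix

variable {n : ℕ} {F : E n × E n → ℝ} {γ : ℝ → E n} {t₁ t₂ t : ℝ}

lemma hessYX_mulVec_add_hessYY_mulVec (hγ : IsGeodesic F γ t₁ t₂) (hF : IsFinsler F)
    (ht : t ∈ Set.Ioo t₁ t₂) :
    hessYX F (γ t, deriv γ t) *ᵥ deriv γ t + hessYY F (γ t, deriv γ t) *ᵥ deriv (deriv γ) t =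
      gradX F (γ t, deriv γ t) := by
  ext i
  exact (hasDerivAt_comp_prodMk (differentiableAt_pdy (hF.contDiffAt (hγ.vel t ht) 2) i)
    (hasDerivAt_of_contDiffOn_two isOpen_Ioo hγ.smooth ht)
    (hasDerivAt_deriv_of_contDiffOn_two isOpen_Ioo hγ.smooth ht)).deriv.symm.trans
    (hγ.eulerLagrange i t ht)

lemma hessYX_mulVec_eq_gradX_iff (hγ : IsGeodesic F γ t₁ t₂) (hF : IsFinsler F)
    (ht : t ∈ Set.Ioo t₁ t₂) :
    hessYX F (γ t, deriv γ t) *ᵥ deriv γ t = gradX F (γ t, deriv γ t) ↔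
      ∃ c : ℝ, deriv (deriv γ) t = c • deriv γ t := by
  rw [← hγ.hessYX_mulVec_add_hessYY_mulVec hF ht, left_eq_add]
  exact hF.hessYY_mulVec_eq_zero_iff (hγ.vel t ht)

end IsGeodesic

lemma rectilinear_iff_forall_deriv_deriv_eq_smul {n : ℕ} {F : E n × E n → ℝ} :
    Rectilinear F ↔ ∀ (γ : ℝ → E n) (t₁ t₂ : ℝ), IsGeodesic F γ t₁ t₂ →
      ∀ t ∈ Set.Ioo t₁ t₂, ∃ c : ℝ, deriv (deriv γ) t = c • deriv γ t :=
  forall₄_congr fun _ _ _ hγ => isStraightOn_iff_forall_deriv_deriv_eq_smul isOpen_Ioo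
    isPreconnected_Ioo (Set.nonempty_Ioo.2 hγ.lt) hγ.smooth hγ.vel

/-- For `n ≥ 1` and a Finsler function `F` on `ℝⁿ`, the space `(ℝⁿ, F)` is
rectilinear in the standard coordinates iff `F` satisfies the Hamel equations there. -/
theorem statement0 {n : ℕ} (hn : 1 ≤ n) (F : E n × E n → ℝ) (hF : IsFinsler F) :
    Rectilinear F ↔ SatisfiesHamel F := by
  rw [rectilinear_iff_forall_deriv_deriv_eq_smul, hF.satisfiesHamel_iff]
  constructor
  · intro hstraight p hp
    obtain ⟨γ, ε, hε, rfl, hγ⟩ := hF.exists_isGeodesic hp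
    have h0 : (0 : ℝ) ∈ Set.Ioo (-ε) ε := by simpa using hε
    exact (hγ.hessYX_mulVec_eq_gradX_iff hF h0).2 (hstraight γ _ _ hγ 0 h0)
  · intro hhamel γ t₁ t₂ hγ t ht
    exact (hγ.hessYX_mulVec_eq_gradX_iff hF ht).1 (hhamel (γ t, deriv γ t) (hγ.vel t ht))
end
end

section
/- Let n ≥ 2, let U ⊆ ℝⁿ be a connected open set, and let g be a smooth Riemannian metric on U with associated Finsler function F(x,y) = √(∑_{i,j} g_{ij}(x)·y^i·y^j). Then g has constant sectional curvature — i.e. there exists c ∈ ℝ such that R_{ijkl} = c·(g_{ik}g_{jl} − g_{il}g_{jk}) throughout U — if and only if every point of U has an open neighborhood V and a smooth diffeomorphism φ of V onto an open subset of ℝⁿ such that the expression F̄ of F in the φ-coordinates satisfies the Hamel equations at every point of φ(V) and every y ≠ 0. -/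
open scoped BigOperators Topology
noncomputable section

/-- Partial derivative on `ℝⁿ` in the direction of the `i`-th coordinate. -/
def pd {n : ℕ} (i : Fin n) (f : E n → ℝ) (x : E n) : ℝ :=
  fderiv ℝ f x (Pi.single i 1)

/-- Christoffel symbols `Γ^i_{jk}` of a Riemannian metric `g`. -/
def Christoffel {n : ℕ} (g : E n → Matrix (Fin n) (Fin n) ℝ) (i j k : Fin n) (x : E n) : ℝ :=
  (1 / 2) * ∑ l, (g x)⁻¹ i l *
    (pd k (fun x' => g x' l j) x + pd j (fun x' => g x' l k) x - pd l (fun x' => g x' j k) x)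

/-- Curvature tensor `R^i_{jkl}` of a Riemannian metric `g`. -/
def RiemUp {n : ℕ} (g : E n → Matrix (Fin n) (Fin n) ℝ) (i j k l : Fin n) (x : E n) : ℝ :=
  pd k (Christoffel g i l j) x - pd l (Christoffel g i k j) x +
    ∑ m, (Christoffel g i k m x * Christoffel g m l j x -
      Christoffel g i l m x * Christoffel g m k j x)

/-- Covariant curvature tensor `R_{ijkl}`. -/
def RiemLow {n : ℕ} (g : E n → Matrix (Fin n) (Fin n) ℝ) (i j k l : Fin n) (x : E n) : ℝ :=
  ∑ m, g x i m * RiemUp g m j k l x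

/-!
By Euler's relation the Hamel equations at `(x, y)` say that the spray of `F` is radial there, that
is, geodesics are straight lines in the `φ`-coordinates; since the geodesic equation is quadratic in
the velocity, this amounts to `D²φ(u, v) = Dφ(Γ(u, v)) + α(u) Dφ(v) + α(v) Dφ(u)` for a one-form
`α`. Given such a `φ`, the Ricci identity forces the curvature to be built from the metric and a
symmetric form, hence to be constant at each point (Beltrami); Schur's lemma makes it locally
constant. Conversely, where the curvature is the constant `c`, the linear system `∇df = -c f g` is
flat, so by Frobenius' theorem it has solutions with arbitrary one-jet at a point, and the quotients
`f / f₀` of such solutions are the coordinates of a chart that straightens the geodesics.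
-/

section Development

set_option maxSynthPendingDepth 3

open Set Metric Filter
open scoped Topology ContDiff NNReal

section Frobenius

variable {X W : Type*} [NormedAddCommGroup X] [NormedSpace ℝ X]
  [NormedAddCommGroup W] [NormedSpace ℝ W]

lemma norm_sub_sub_fderiv_le_of_lipschitzOnWith {f : X → W} {s : Set X} {L : ℝ≥0}
    (hs : Convex ℝ s) (hf : ∀ x ∈ s, DifferentiableAt ℝ f x)
    (hL : LipschitzOnWith L (fderiv ℝ f) s) {p q : X} (hp : p ∈ s) (hq : q ∈ s) :
    ‖f q - f p - fderiv ℝ f p (q - p)‖ ≤ L * ‖q - p‖ ^ 2 := by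
  have hseg : segment ℝ p q ⊆ s := hs.segment_subset hp hq
  have hvar : ∀ y ∈ segment ℝ p q, ‖fderiv ℝ f y - fderiv ℝ f p‖ ≤ L * ‖q - p‖ := fun y hy =>
    calc ‖fderiv ℝ f y - fderiv ℝ f p‖ ≤ L * ‖y - p‖ := hL.norm_sub_le (hseg hy) hp
      _ ≤ L * ‖q - p‖ := by gcongr; exact norm_sub_le_of_mem_segment hy
  calc ‖f q - f p - fderiv ℝ f p (q - p)‖ ≤ L * ‖q - p‖ * ‖q - p‖ :=
        (convex_segment p q).norm_image_sub_le_of_norm_fderiv_le'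
          (fun y hy => hf y (hseg hy)) hvar (left_mem_segment ℝ p q) (right_mem_segment ℝ p q)
    _ = L * ‖q - p‖ ^ 2 := by ring

/-- The compatibility condition at `x` of the total differential system `dw = A(·) w`, i.e. the
vanishing at `x` of the curvature of the connection whose parallel sections solve it. -/
def IsFlatAt (A : X → X →L[ℝ] W →L[ℝ] W) (x : X) : Prop :=
  ∀ h k w, fderiv ℝ A x k h w + A x h (A x k w) = fderiv ℝ A x h k w + A x k (A x h w)

/-- The restriction of the system `dw = A(·) w`, `w x₀ = w₀`, to the ray from `x₀` in the
direction `x`: `u t` stands for `w (x₀ + t • x)`. -/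
structure IsRadialSolution (A : X → X →L[ℝ] W →L[ℝ] W) (x₀ : X) (w₀ : W) (x : X)
    (u : ℝ → W) : Prop where
  initial : u 0 = w₀
  hasDerivWithinAt : ∀ t ∈ Icc (0 : ℝ) 1,
    HasDerivWithinAt u (A (x₀ + t • x) x (u t)) (Icc 0 1) t

variable {A : X → X →L[ℝ] W →L[ℝ] W} {s : Set X} {C : ℝ} {x₀ x h : X} {w₀ : W} {u v : ℝ → W}

lemma norm_apply_le_of_mem_segment (hs : Convex ℝ s) (hA : ∀ y ∈ s, ‖A y‖ ≤ C) (hx₀ : x₀ ∈ s)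
    (hx : x₀ + x ∈ s) {t : ℝ} (ht : t ∈ Icc (0 : ℝ) 1) :
    ‖A (x₀ + t • x) x‖ ≤ C * ‖x‖ :=
  (A (x₀ + t • x)).le_of_opNorm_le (hA _ (hs.add_smul_mem hx₀ hx ht)) x

lemma exists_isRadialSolution [CompleteSpace W] (hs : Convex ℝ s) (hAc : ContinuousOn A s)
    (hA : ∀ y ∈ s, ‖A y‖ ≤ C) (hx₀ : x₀ ∈ s) (hx : x₀ + x ∈ s)
    (hsmall : C * ‖x‖ * (‖w₀‖ + 1) ≤ 1) : ∃ u, IsRadialSolution A x₀ w₀ x u := by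
  have hop : ∀ t ∈ Icc (0 : ℝ) 1, ‖A (x₀ + t • x) x‖ ≤ C * ‖x‖ := fun t ht =>
    norm_apply_le_of_mem_segment hs hA hx₀ hx ht
  have hC : 0 ≤ C := (norm_nonneg _).trans (hA x₀ hx₀)
  have hode : IsPicardLindelof (fun t w => A (x₀ + t • x) x w) (tmin := 0) (tmax := 1)
      ⟨0, by simp⟩ w₀ 1 0 1 ⟨C * ‖x‖, by positivity⟩ :=
    { lipschitzOnWith := fun t ht =>
        ((A (x₀ + t • x) x).lipschitz.weaken (hop t ht)).lipschitzOnWith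
      continuousOn := fun w _ =>
        ((hAc.comp (by fun_prop) fun t ht => hs.add_smul_mem hx₀ hx ht).clm_apply
          continuousOn_const).clm_apply continuousOn_const
      norm_le := fun t ht w hw => by
        have hwM : ‖w‖ ≤ ‖w₀‖ + 1 := by
          simpa using norm_le_of_mem_closedBall hw
        calc ‖A (x₀ + t • x) x w‖ ≤ C * ‖x‖ * ‖w‖ :=
              ContinuousLinearMap.le_of_opNorm_le _ (hop t ht) w
          _ ≤ C * ‖x‖ * (‖w₀‖ + 1) := by gcongr
          _ ≤ 1 := hsmall
      mul_max_le := by simp }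
  obtain ⟨u, hu⟩ := hode.exists_eq_forall_mem_Icc_hasDerivWithinAt₀
  exact ⟨u, hu.1, hu.2⟩

namespace IsRadialSolution

lemma hasDerivWithinAt_Ici (hu : IsRadialSolution A x₀ w₀ x u) {t : ℝ} (ht : t ∈ Ico (0 : ℝ) 1) :
    HasDerivWithinAt u (A (x₀ + t • x) x (u t)) (Ici t) t :=
  (hu.hasDerivWithinAt t ⟨ht.1, ht.2.le⟩).mono_of_mem_nhdsWithin (Icc_mem_nhdsGE_of_mem ht)

lemma continuousOn (hu : IsRadialSolution A x₀ w₀ x u) : ContinuousOn u (Icc 0 1) :=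
  fun t ht => (hu.hasDerivWithinAt t ht).continuousWithinAt

lemma norm_le (hu : IsRadialSolution A x₀ w₀ x u)
    (hA : ∀ t ∈ Icc (0 : ℝ) 1, ‖A (x₀ + t • x) x‖ ≤ C) {t : ℝ} (ht : t ∈ Icc (0 : ℝ) 1) :
    ‖u t‖ ≤ ‖w₀‖ * Real.exp C := by
  have hC : 0 ≤ C := (norm_nonneg _).trans (hA t ht)
  have hgronwall := norm_le_gronwallBound_of_norm_deriv_right_le (δ := ‖w₀‖) (K := C) (ε := 0)
    hu.continuousOn (fun t ht => hu.hasDerivWithinAt_Ici ht) (by rw [hu.initial])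
    (fun t ht => by
      rw [add_zero]
      exact ContinuousLinearMap.le_of_opNorm_le _ (hA t ⟨ht.1, ht.2.le⟩) _) t ht
  rw [gronwallBound_ε0, sub_zero] at hgronwall
  calc ‖u t‖ ≤ ‖w₀‖ * Real.exp (C * t) := hgronwall
    _ ≤ ‖w₀‖ * Real.exp C := by gcongr; exact mul_le_of_le_one_right hC ht.2

lemma eq_initial_of_direction_zero (hu : IsRadialSolution A x₀ w₀ 0 u) : u 1 = w₀ := by
  have hconst := constant_of_has_deriv_right_zero hu.continuousOn
    (fun t ht => by simpa using hu.hasDerivWithinAt_Ici ht) 1 (by simp)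
  rw [hconst, hu.initial]

/-- The first variation of the radial solution in a direction `h`. If the system is solvable then
`A (x₀ + t • x) h (u t)` is the derivative of the solution in the direction `h`, and moving the
ray from `x` to `x + h` displaces its point at time `t` by `t • h`. -/
lemma hasDerivWithinAt_variation (hu : IsRadialSolution A x₀ w₀ x u) {t : ℝ}
    (ht : t ∈ Icc (0 : ℝ) 1) (hA : DifferentiableAt ℝ A (x₀ + t • x)) (h : X) :
    HasDerivWithinAt (fun t => u t + t • A (x₀ + t • x) h (u t))
      (A (x₀ + t • x) x (u t) + (A (x₀ + t • x) h (u t) +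
        t • (fderiv ℝ A (x₀ + t • x) x h (u t) + A (x₀ + t • x) h (A (x₀ + t • x) x (u t)))))
      (Icc 0 1) t := by
  have hray : HasDerivAt (fun t : ℝ => x₀ + t • x) x t := by
    simpa using ((hasDerivAt_id t).smul_const x).const_add x₀
  have hA' : HasDerivWithinAt (fun t : ℝ => A (x₀ + t • x)) (fderiv ℝ A (x₀ + t • x) x)
      (Icc 0 1) t := (hA.hasFDerivAt.comp_hasDerivAt t hray).hasDerivWithinAt
  have hAhu := (hA'.clm_apply (hasDerivWithinAt_const t _ h)).clm_apply (hu.hasDerivWithinAt t ht)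
  refine ((hu.hasDerivWithinAt t ht).add ((hasDerivWithinAt_id t _).smul hAhu)).congr_deriv ?_
  simp only [id_eq, map_zero, add_zero, one_smul]
  abel

end IsRadialSolution

lemma norm_variation_residual_le {Ap Aq : X →L[ℝ] W →L[ℝ] W} {D : X →L[ℝ] X →L[ℝ] W →L[ℝ] W}
    {w : W} {t L M : ℝ} (ht : t ∈ Icc (0 : ℝ) 1) (hAp : ‖Ap‖ ≤ C) (hw : ‖w‖ ≤ M)
    (hxh : ‖x + h‖ ≤ 1) (hD : ‖D‖ ≤ C) (hρ : ‖Aq - Ap - t • D h‖ ≤ L * ‖h‖ ^ 2)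
    (hAqp : ‖Aq - Ap‖ ≤ C * ‖h‖)
    (hflat : D x h w + Ap h (Ap x w) = D h x w + Ap x (Ap h w)) :
    ‖Ap x w + (Ap h w + t • (D x h w + Ap h (Ap x w))) - Aq (x + h) (w + t • Ap h w)‖ ≤
      (L + C + 2 * C ^ 2) * M * ‖h‖ ^ 2 := by
  have hC : 0 ≤ C := (norm_nonneg _).trans hAp
  have : 0 ≤ M := (norm_nonneg _).trans hw
  have hAph : ∀ z, ‖Ap h z‖ ≤ C * ‖h‖ * ‖z‖ := fun z =>
    (Ap h).le_of_opNorm_le (Ap.le_of_opNorm_le hAp h) z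
  have hAphw : ‖Ap h w‖ ≤ C * ‖h‖ * M := (hAph w).trans (by gcongr)
  have hresidual : Ap x w + (Ap h w + t • (D x h w + Ap h (Ap x w)))
      - Aq (x + h) (w + t • Ap h w) =
      -((Aq - Ap - t • D h) (x + h) w + t • (D h h w + Ap h (Ap h w)
        + (Aq - Ap) (x + h) (Ap h w))) := by
    rw [hflat]
    simp only [map_add, map_smul, add_apply, sub_apply, smul_apply, smul_add, smul_sub]
    abel
  have hρw : ‖(Aq - Ap - t • D h) (x + h) w‖ ≤ L * ‖h‖ ^ 2 * M :=
    calc ‖(Aq - Ap - t • D h) (x + h) w‖ ≤ L * ‖h‖ ^ 2 * ‖x + h‖ * ‖w‖ :=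
          ContinuousLinearMap.le_of_opNorm_le _ (ContinuousLinearMap.le_of_opNorm_le _ hρ _) w
      _ ≤ L * ‖h‖ ^ 2 * 1 * M := by
          have := (norm_nonneg _).trans hρ
          gcongr
      _ = L * ‖h‖ ^ 2 * M := by ring
  have hDw : ‖D h h w‖ ≤ C * ‖h‖ * ‖h‖ * M :=
    ((D h h).le_of_opNorm_le ((D h).le_of_opNorm_le (D.le_of_opNorm_le hD h) h) w).trans
      (by gcongr)
  have hAAw : ‖Ap h (Ap h w)‖ ≤ C * ‖h‖ * (C * ‖h‖ * M) := (hAph _).trans (by gcongr)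
  have hAqpw : ‖(Aq - Ap) (x + h) (Ap h w)‖ ≤ C * ‖h‖ * 1 * (C * ‖h‖ * M) :=
    (ContinuousLinearMap.le_of_opNorm_le _ (ContinuousLinearMap.le_of_opNorm_le _ hAqp _) _).trans
      (by gcongr)
  have hsum : ‖t • (D h h w + Ap h (Ap h w) + (Aq - Ap) (x + h) (Ap h w))‖ ≤
      C * ‖h‖ * ‖h‖ * M + C * ‖h‖ * (C * ‖h‖ * M) + C * ‖h‖ * 1 * (C * ‖h‖ * M) := by
    rw [norm_smul, Real.norm_of_nonneg ht.1]
    exact (mul_le_of_le_one_left (norm_nonneg _) ht.2).trans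
      ((norm_add₃_le).trans (add_le_add_three hDw hAAw hAqpw))
  rw [hresidual, norm_neg]
  calc _ ≤ L * ‖h‖ ^ 2 * M + (C * ‖h‖ * ‖h‖ * M + C * ‖h‖ * (C * ‖h‖ * M)
          + C * ‖h‖ * 1 * (C * ‖h‖ * M)) := norm_add_le_of_le hρw hsum
    _ = (L + C + 2 * C ^ 2) * M * ‖h‖ ^ 2 := by ring

lemma norm_variation_residual_le_of_isFlatAt {L : ℝ≥0} {M t : ℝ} {p : X} {w : W}
    (hs : Convex ℝ s) (hAd : ∀ y ∈ s, DifferentiableAt ℝ A y) (hA : ∀ y ∈ s, ‖A y‖ ≤ C)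
    (hDA : ∀ y ∈ s, ‖fderiv ℝ A y‖ ≤ C) (hL : LipschitzOnWith L (fderiv ℝ A) s)
    (hflat : IsFlatAt A p) (ht : t ∈ Icc (0 : ℝ) 1) (hp : p ∈ s) (hq : p + t • h ∈ s)
    (hxh : ‖x + h‖ ≤ 1) (hw : ‖w‖ ≤ M) :
    ‖A p x w + (A p h w + t • (fderiv ℝ A p x h w + A p h (A p x w)))
      - A (p + t • h) (x + h) (w + t • A p h w)‖ ≤ (L + C + 2 * C ^ 2) * M * ‖h‖ ^ 2 := by
  have hC : 0 ≤ C := (norm_nonneg _).trans (hA p hp)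
  have hth : ‖t • h‖ ≤ ‖h‖ := by
    rw [norm_smul, Real.norm_of_nonneg ht.1]
    exact mul_le_of_le_one_left (norm_nonneg h) ht.2
  refine norm_variation_residual_le ht (hA p hp) hw hxh (hDA p hp) ?_ ?_ (hflat h x w)
  · have htaylor := norm_sub_sub_fderiv_le_of_lipschitzOnWith hs hAd hL hp hq
    rw [add_sub_cancel_left, map_smul] at htaylor
    exact htaylor.trans (by gcongr)
  · have hlip := hs.norm_image_sub_le_of_norm_fderiv_le hAd hDA hp hq
    rw [add_sub_cancel_left] at hlip
    exact hlip.trans (by gcongr)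

/-- Two neighbouring radial solutions differ by the first variation up to `O(‖h‖ ^ 2)`: flatness
makes the first variation of one an approximate solution of the other's equation. -/
lemma IsRadialSolution.norm_sub_variation_le {L : ℝ≥0} {M : ℝ}
    (hs : Convex ℝ s) (hAd : ∀ y ∈ s, DifferentiableAt ℝ A y) (hA : ∀ y ∈ s, ‖A y‖ ≤ C)
    (hDA : ∀ y ∈ s, ‖fderiv ℝ A y‖ ≤ C) (hL : LipschitzOnWith L (fderiv ℝ A) s)
    (hflat : ∀ y ∈ s, IsFlatAt A y) (hx₀ : x₀ ∈ s) (hx : x₀ + x ∈ s) (hxh : x₀ + (x + h) ∈ s)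
    (hxh1 : ‖x + h‖ ≤ 1) (hu : IsRadialSolution A x₀ w₀ x u)
    (hv : IsRadialSolution A x₀ w₀ (x + h) v) (huM : ∀ t ∈ Icc (0 : ℝ) 1, ‖u t‖ ≤ M) :
    ‖v 1 - (u 1 + A (x₀ + x) h (u 1))‖ ≤
      gronwallBound 0 C ((L + C + 2 * C ^ 2) * M * ‖h‖ ^ 2) 1 := by
  have hC : 0 ≤ C := (norm_nonneg _).trans (hA x₀ hx₀)
  have hp : ∀ t ∈ Icc (0 : ℝ) 1, x₀ + t • x ∈ s := fun t => hs.add_smul_mem hx₀ hx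
  have hq : ∀ t ∈ Icc (0 : ℝ) 1, x₀ + t • (x + h) ∈ s := fun t => hs.add_smul_mem hx₀ hxh
  have hpq : ∀ t : ℝ, x₀ + t • (x + h) = x₀ + t • x + t • h := fun t => by module
  have hvar : ∀ t ∈ Icc (0 : ℝ) 1, _ := fun t ht =>
    hu.hasDerivWithinAt_variation ht (hAd _ (hp t ht)) h
  have hop : ∀ t ∈ Icc (0 : ℝ) 1, ‖A (x₀ + t • (x + h)) (x + h)‖ ≤ C := fun t ht =>
    (norm_apply_le_of_mem_segment hs hA hx₀ hxh ht).trans (mul_le_of_le_one_right hC hxh1)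
  have hdist := dist_le_of_approx_trajectories_ODE_of_mem
    (v := fun t w => A (x₀ + t • (x + h)) (x + h) w) (K := ⟨C, hC⟩) (s := fun _ => univ)
    (εf := 0) (εg := (L + C + 2 * C ^ 2) * M * ‖h‖ ^ 2) (δ := 0)
    (fun t ht => (ContinuousLinearMap.lipschitz _ |>.weaken
      (hop t (Ico_subset_Icc_self ht))).lipschitzOnWith)
    hv.continuousOn (fun t ht => hv.hasDerivWithinAt_Ici ht) (fun t _ => (dist_self _).le)
    (fun _ _ => trivial) (fun t ht => (hvar t ht).continuousWithinAt)
    (fun t ht => (hvar t (Ico_subset_Icc_self ht)).mono_of_mem_nhdsWithin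
      (Icc_mem_nhdsGE_of_mem ht))
    (fun t ht => by
      have ht' := Ico_subset_Icc_self ht
      rw [dist_eq_norm, hpq]
      exact norm_variation_residual_le_of_isFlatAt hs hAd hA hDA hL (hflat _ (hp t ht')) ht'
        (hp t ht') (hpq t ▸ hq t ht') hxh1 (huM t ht'))
    (fun _ _ => trivial) (by simp [hu.initial, hv.initial]) 1 (by simp)
  simp only [dist_eq_norm, one_smul, sub_zero, zero_add] at hdist
  exact hdist

variable {L : ℝ≥0}

lemma hasFDerivAt_of_isRadialSolution {ε : ℝ} (hε : ε ≤ 1) (hC : C ≠ 0)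
    (hAd : ∀ y ∈ ball x₀ ε, DifferentiableAt ℝ A y) (hA : ∀ y ∈ ball x₀ ε, ‖A y‖ ≤ C)
    (hDA : ∀ y ∈ ball x₀ ε, ‖fderiv ℝ A y‖ ≤ C)
    (hL : LipschitzOnWith L (fderiv ℝ A) (ball x₀ ε)) (hflat : ∀ y ∈ ball x₀ ε, IsFlatAt A y)
    {u : X → ℝ → W} (hu : ∀ y ∈ ball x₀ ε, IsRadialSolution A x₀ w₀ (y - x₀) (u y)) {y : X}
    (hy : y ∈ ball x₀ ε) : HasFDerivAt (fun z => u z 1) ((A y).flip (u y 1)) y := by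
  have hx₀ : x₀ ∈ ball x₀ ε := mem_ball_self (pos_of_mem_ball hy)
  have hs := convex_ball x₀ ε
  have hC0 : 0 ≤ C := (norm_nonneg _).trans (hA y hy)
  have hnorm : ∀ z ∈ ball x₀ ε, ‖z - x₀‖ ≤ 1 := fun z hz =>
    (mem_ball_iff_norm.1 hz).le.trans hε
  have hbound : ∀ t ∈ Icc (0 : ℝ) 1, ‖u y t‖ ≤ ‖w₀‖ * Real.exp C := fun t ht =>
    (hu y hy).norm_le (fun τ hτ =>
      (norm_apply_le_of_mem_segment hs hA hx₀ (by simpa using hy) hτ).trans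
        (mul_le_of_le_one_right hC0 (hnorm y hy))) ht
  have hO : (fun h => u (y + h) 1 - u y 1 - (A y).flip (u y 1) h) =O[𝓝 0] fun h => ‖h‖ ^ 2 := by
    refine Asymptotics.IsBigO.of_bound
      ((L + C + 2 * C ^ 2) * (‖w₀‖ * Real.exp C) / C * (Real.exp C - 1)) ?_
    have hnhds : ∀ᶠ h in 𝓝 (0 : X), y + h ∈ ball x₀ ε :=
      (continuous_const_add y).continuousAt.eventually_mem (by simpa using isOpen_ball.mem_nhds hy)
    filter_upwards [hnhds] with h hh
    have hsub : y + h - x₀ = y - x₀ + h := add_sub_right_comm y h x₀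
    have hest := (hu y hy).norm_sub_variation_le hs hAd hA hDA hL hflat hx₀ (by simpa using hy)
      (by simpa [← hsub] using hh) (hsub ▸ hnorm _ hh) (hsub ▸ hu _ hh) hbound
    rw [gronwallBound_of_K_ne_0 hC, add_sub_cancel, ← sub_sub] at hest
    refine hest.trans_eq ?_
    simp only [norm_pow, norm_norm, mul_one]
    ring
  rw [hasFDerivAt_iff_isLittleO_nhds_zero]
  exact hO.trans_isLittleO (Asymptotics.isLittleO_norm_pow_id one_lt_two)

theorem exists_hasFDerivAt_of_isFlatAt [CompleteSpace W] (hA : ContDiffAt ℝ 2 A x₀)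
    (hflat : ∀ᶠ x in 𝓝 x₀, IsFlatAt A x) (w₀ : W) :
    ∃ w : X → W, w x₀ = w₀ ∧ ∀ᶠ x in 𝓝 x₀, HasFDerivAt w ((A x).flip (w x)) x := by
  have hDA : ContDiffAt ℝ 1 (fderiv ℝ A) x₀ := hA.fderiv_right (m := 1) (by norm_num)
  obtain ⟨L, s, hs, hL⟩ := hDA.exists_lipschitzOnWith
  obtain ⟨C, hC, hAC, hDAC⟩ : ∃ C > 0, ‖A x₀‖ < C ∧ ‖fderiv ℝ A x₀‖ < C :=
    ⟨‖A x₀‖ + ‖fderiv ℝ A x₀‖ + 1, by positivity, by linarith [norm_nonneg (fderiv ℝ A x₀)],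
      by linarith [norm_nonneg (A x₀)]⟩
  have hgood : ∀ᶠ y in 𝓝 x₀, (DifferentiableAt ℝ A y ∧ IsFlatAt A y ∧ y ∈ s) ∧
      ‖A y‖ ≤ C ∧ ‖fderiv ℝ A y‖ ≤ C := by
    filter_upwards [hA.eventually (by simp), hflat, hs,
      hA.continuousAt.norm.eventually_lt continuousAt_const hAC,
      hDA.continuousAt.norm.eventually_lt continuousAt_const hDAC] with y hy hfl hys hy1 hy2
    exact ⟨⟨hy.differentiableAt (by simp), hfl, hys⟩, hy1.le, hy2.le⟩
  obtain ⟨r, hr, hball⟩ := Metric.eventually_nhds_iff_ball.1 hgood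
  obtain ⟨ε, hε, hεr, hε1, hεC⟩ : ∃ ε > 0, ε ≤ r ∧ ε ≤ 1 ∧ ε ≤ 1 / (C * (‖w₀‖ + 1)) :=
    ⟨min r (min 1 (1 / (C * (‖w₀‖ + 1)))), by positivity, by simp, by simp, by simp⟩
  have hb : ∀ y ∈ ball x₀ ε, _ := fun y hy => hball y (ball_subset_ball hεr hy)
  have hray : ∀ y ∈ ball x₀ ε, ∃ u, IsRadialSolution A x₀ w₀ (y - x₀) u := fun y hy => by
    refine exists_isRadialSolution (convex_ball x₀ ε)
      (fun z hz => (hb z hz).1.1.continuousAt.continuousWithinAt) (fun z hz => (hb z hz).2.1)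
      (mem_ball_self hε) (by simpa using hy) ?_
    calc C * ‖y - x₀‖ * (‖w₀‖ + 1) ≤ C * (1 / (C * (‖w₀‖ + 1))) * (‖w₀‖ + 1) := by
          gcongr
          exact (mem_ball_iff_norm.1 hy).le.trans hεC
      _ = 1 := by field_simp
  choose! u hu using hray
  refine ⟨fun y => u y 1, (sub_self x₀ ▸ hu x₀ (mem_ball_self hε)).eq_initial_of_direction_zero, ?_⟩
  filter_upwards [ball_mem_nhds x₀ hε] with y hy
  exact hasFDerivAt_of_isRadialSolution hε1 hC.ne' (fun z hz => (hb z hz).1.1)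
    (fun z hz => (hb z hz).2.1) (fun z hz => (hb z hz).2.2)
    (hL.mono fun z hz => (hb z hz).1.2.2) (fun z hz => (hb z hz).1.2.1) hu hy

end Frobenius

section Connection

variable {X Y Z : Type*} [NormedAddCommGroup X] [NormedSpace ℝ X]
  [NormedAddCommGroup Y] [NormedSpace ℝ Y] [NormedAddCommGroup Z] [NormedSpace ℝ Z]

lemma fderiv_clm_apply_apply {A : X → Y →L[ℝ] Z} {b : X → Y} {x : X}
    (hA : DifferentiableAt ℝ A x) (hb : DifferentiableAt ℝ b x) (h : X) :
    fderiv ℝ (fun y => A y (b y)) x h = fderiv ℝ A x h (b x) + A x (fderiv ℝ b x h) := by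
  rw [fderiv_clm_apply hA hb]
  simp [add_comm]

lemma fderiv_clm_apply_const_apply {A : X → Y →L[ℝ] Z} {x : X} (hA : DifferentiableAt ℝ A x)
    (v : Y) (h : X) : fderiv ℝ (fun y => A y v) x h = fderiv ℝ A x h v := by
  simp [fderiv_clm_apply_apply hA (differentiableAt_const v)]

lemma fderiv_clm_apply_const_const_apply {A : X → X →L[ℝ] Y →L[ℝ] Z} {x : X}
    (hA : DifferentiableAt ℝ A x) (u : X) (v : Y) (h : X) :
    fderiv ℝ (fun y => A y u v) x h = fderiv ℝ A x h u v := by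
  rw [fderiv_clm_apply_const_apply (A := fun y => A y u) (by fun_prop),
    fderiv_clm_apply_const_apply hA]

lemma fderiv_fderiv_comm {f : X → Y} {x : X} (hf : ContDiffAt ℝ 2 f x) (k l : X) :
    fderiv ℝ (fderiv ℝ f) x k l = fderiv ℝ (fderiv ℝ f) x l k :=
  hf.isSymmSndFDerivAt (by simp) k l

/-- The curvature operator `curvature Γ x k l j = R(k, l) j` of the connection with Christoffel
tensor `Γ`, with the sign convention of `RiemUp`. -/
def curvature (Γ : X → X →L[ℝ] X →L[ℝ] X) (x : X) : X →L[ℝ] X →L[ℝ] X →L[ℝ] X :=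
  let T := fderiv ℝ Γ x + (ContinuousLinearMap.compL ℝ X X X).bilinearComp (Γ x) (Γ x)
  T - T.flip

lemma curvature_apply (Γ : X → X →L[ℝ] X →L[ℝ] X) (x k l j : X) :
    curvature Γ x k l j =
      fderiv ℝ Γ x k l j + Γ x k (Γ x l j) - (fderiv ℝ Γ x l k j + Γ x l (Γ x k j)) := rfl

lemma ricci_identity {α : X → X →L[ℝ] Y} {Γ : X → X →L[ℝ] X →L[ℝ] X} {S : X → X → X → Y} {x : X}
    (hα : ContDiffAt ℝ 2 α x) (hΓ : DifferentiableAt ℝ Γ x)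
    (hS : ∀ l j, DifferentiableAt ℝ (fun y => S y l j) x)
    (hαS : ∀ᶠ y in 𝓝 x, ∀ l j, fderiv ℝ α y l j = α y (Γ y l j) + S y l j) (k l j : X) :
    α x (curvature Γ x k l j) = fderiv ℝ (fun y => S y k j) x l + S x l (Γ x k j) -
      (fderiv ℝ (fun y => S y l j) x k + S x k (Γ x l j)) := by
  have hα1 : DifferentiableAt ℝ α x := hα.differentiableAt (by simp)
  have hα2 : DifferentiableAt ℝ (fderiv ℝ α) x :=
    (hα.fderiv_right (m := 1) (by norm_num)).differentiableAt (by simp)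
  have hderiv : ∀ k l, fderiv ℝ (fderiv ℝ α) x k l j = α x (Γ x k (Γ x l j)) + S x k (Γ x l j) +
      α x (fderiv ℝ Γ x k l j) + fderiv ℝ (fun y => S y l j) x k := fun k l => by
    have hlj : (fun y => fderiv ℝ α y l j) =ᶠ[𝓝 x] fun y => α y (Γ y l j) + S y l j :=
      hαS.mono fun y hy => hy l j
    rw [← fderiv_clm_apply_const_const_apply hα2, hlj.fderiv_eq,
      fderiv_fun_add (by fun_prop) (hS l j), add_apply,
      fderiv_clm_apply_apply hα1 (by fun_prop), fderiv_clm_apply_const_const_apply hΓ,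
      hαS.self_of_nhds]
  have hsymm := congrArg (· j) (fderiv_fderiv_comm hα k l)
  simp only [hderiv] at hsymm
  simp only [curvature_apply, map_sub, map_add]
  linear_combination (norm := module) hsymm

end Connection

section LeviCivita

variable {X : Type*} [NormedAddCommGroup X] [NormedSpace ℝ X]

/-- A smooth Riemannian metric on the open set `U`, as a field of bilinear forms. -/
structure IsRiemannianOn (g : X → X →L[ℝ] X →L[ℝ] ℝ) (U : Set X) : Prop where
  isOpen : IsOpen U
  contDiffOn : ContDiffOn ℝ ∞ g U
  symm : ∀ x ∈ U, ∀ u v, g x u v = g x v u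
  pos : ∀ x ∈ U, ∀ v, v ≠ 0 → 0 < g x v v

/-- `Γ` is the Christoffel tensor of the Levi-Civita connection of the metric `g` on `U`, that is,
the torsion-free connection for which `g` is parallel. -/
structure IsLeviCivitaOn (g : X → X →L[ℝ] X →L[ℝ] ℝ) (Γ : X → X →L[ℝ] X →L[ℝ] X)
    (U : Set X) : Prop extends IsRiemannianOn g U where
  contDiffOn_conn : ContDiffOn ℝ ∞ Γ U
  conn_symm : ∀ x ∈ U, ∀ u v, Γ x u v = Γ x v u
  fderiv_metric : ∀ x ∈ U, ∀ w u v, fderiv ℝ g x w u v = g x (Γ x w u) v + g x u (Γ x w v)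

/-- The metric has curvature tensor `R(u, v) w = c (⟨v, w⟩ u - ⟨u, w⟩ v)` at `x`. -/
def HasConstantCurvatureAt (g : X → X →L[ℝ] X →L[ℝ] ℝ) (Γ : X → X →L[ℝ] X →L[ℝ] X) (x : X)
    (c : ℝ) : Prop :=
  ∀ u v w, curvature Γ x u v w = c • (g x v w • u - g x u w • v)

variable {g : X → X →L[ℝ] X →L[ℝ] ℝ} {Γ : X → X →L[ℝ] X →L[ℝ] X} {U V : Set X} {x : X}

namespace IsRiemannianOn

lemma contDiffAt (hg : IsRiemannianOn g U) (hx : x ∈ U) : ContDiffAt ℝ ∞ g x :=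
  hg.contDiffOn.contDiffAt (hg.isOpen.mem_nhds hx)

lemma differentiableAt (hg : IsRiemannianOn g U) (hx : x ∈ U) : DifferentiableAt ℝ g x :=
  (hg.contDiffAt hx).differentiableAt (by simp)

lemma eq_zero_of_forall (hg : IsRiemannianOn g U) (hx : x ∈ U) {u : X}
    (hu : ∀ v, g x u v = 0) : u = 0 := by
  by_contra hne
  exact (hg.pos x hx u hne).ne' (hu u)

end IsRiemannianOn

namespace IsLeviCivitaOn

lemma mono (hg : IsLeviCivitaOn g Γ U) (hV : IsOpen V) (hVU : V ⊆ U) : IsLeviCivitaOn g Γ V where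
  isOpen := hV
  contDiffOn := hg.contDiffOn.mono hVU
  symm x hx := hg.symm x (hVU hx)
  pos x hx := hg.pos x (hVU hx)
  contDiffOn_conn := hg.contDiffOn_conn.mono hVU
  conn_symm x hx := hg.conn_symm x (hVU hx)
  fderiv_metric x hx := hg.fderiv_metric x (hVU hx)

lemma differentiableAt_conn (hg : IsLeviCivitaOn g Γ U) (hx : x ∈ U) : DifferentiableAt ℝ Γ x :=
  (hg.contDiffOn_conn.contDiffAt (hg.isOpen.mem_nhds hx)).differentiableAt (by simp)

lemma curvature_skewAdjoint (hg : IsLeviCivitaOn g Γ U) (hx : x ∈ U) (k l u v : X) :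
    g x u (curvature Γ x k l v) = -g x v (curvature Γ x k l u) := by
  have hdg := hg.differentiableAt hx
  have hdΓ := hg.differentiableAt_conn hx
  have hderiv : ∀ k l, fderiv ℝ (fun y => g y (Γ y l u) v) x k = g x (Γ x k (Γ x l u)) v +
      g x (Γ x l u) (Γ x k v) + g x (fderiv ℝ Γ x k l u) v := fun k l => by
    rw [fderiv_clm_apply_const_apply (A := fun y => g y (Γ y l u)) (by fun_prop),
      fderiv_clm_apply_apply hdg (by fun_prop), add_apply, hg.fderiv_metric x hx,
      fderiv_clm_apply_const_const_apply hdΓ]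
  have hparallel : ∀ᶠ y in 𝓝 x, ∀ l j, fderiv ℝ (fun z => g z u) y l j =
      g y u (Γ y l j) + g y (Γ y l u) j := by
    filter_upwards [hg.isOpen.mem_nhds hx] with y hy l j
    rw [fderiv_clm_apply_const_apply (hg.differentiableAt hy), hg.fderiv_metric y hy, add_comm]
  have hcontDiff : ContDiffAt ℝ 2 (fun y => g y u) x :=
    ((hg.contDiffAt hx).clm_apply contDiffAt_const).of_le ENat.LEInfty.out
  rw [ricci_identity hcontDiff hdΓ (by fun_prop) hparallel, hderiv, hderiv, curvature_apply,
    hg.symm x hx v]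
  simp only [map_add, map_sub, add_apply, sub_apply]
  ring

end IsLeviCivitaOn

end LeviCivita

section OrthogonalPairs

variable {𝕜 M : Type*} [Field 𝕜] [LinearOrder 𝕜] [IsStrictOrderedRing 𝕜] [AddCommGroup M]
  [Module 𝕜 M] {g Q : M →ₗ[𝕜] M →ₗ[𝕜] 𝕜}

lemma bilin_eq_zero_of_eq_zero_on_orthogonal (hsymm : ∀ u v, g u v = g v u)
    (hpos : ∀ v, v ≠ 0 → 0 < g v v) (horth : ∀ u v, g u v = 0 → Q u v = 0) {e : M} (he : e ≠ 0)
    (hQe : Q e e = 0) : Q = 0 := by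
  have hge := (hpos e he).ne'
  have hdiag_orth : ∀ w, g e w = 0 → Q w w = 0 := fun w hw => by
    have hwe : g w e = 0 := hsymm e w ▸ hw
    have hrotate := horth (e + w) (g w w • e - g e e • w) (by simp [hw, hwe]; ring)
    simpa [hQe, horth e w hw, horth w e hwe, hge] using hrotate
  have hdiag : ∀ w, Q w w = 0 := fun w => by
    have hproj : g e (g e e • w - g e w • e) = 0 := by simp; ring
    have hcomponent := hdiag_orth _ hproj
    have hleft := horth _ _ hproj
    have hright := horth _ _ ((hsymm _ _).trans hproj)
    simp only [map_sub, map_smul, LinearMap.sub_apply, LinearMap.smul_apply, smul_eq_mul, hQe,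
      mul_zero, sub_zero, mul_eq_zero, hge, false_or] at hcomponent hleft hright
    simpa [hleft, hright, hge] using hcomponent
  ext u v
  rcases eq_or_ne u 0 with rfl | hu
  · simp
  have huv := horth u (g u u • v - g u v • u) (by simp; ring)
  simpa [hdiag, (hpos u hu).ne'] using huv

lemma bilin_eq_div_mul_of_eq_zero_on_orthogonal (hsymm : ∀ u v, g u v = g v u)
    (hpos : ∀ v, v ≠ 0 → 0 < g v v) (horth : ∀ u v, g u v = 0 → Q u v = 0) {e : M} (he : e ≠ 0)
    (u v : M) : Q u v = Q e e / g e e * g u v := by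
  have hzero : Q - (Q e e / g e e) • g = 0 :=
    bilin_eq_zero_of_eq_zero_on_orthogonal hsymm hpos
      (fun u v huv => by simp [horth u v huv, huv]) he (by simp [(hpos e he).ne'])
  simpa [sub_eq_zero] using congr($hzero u v)

lemma bilin_eq_zero_of_skew (hsymm : ∀ u v, g u v = g v u) (hpos : ∀ v, v ≠ 0 → 0 < g v v)
    (hskew : ∀ k l j, g j (Q l j • k - Q k j • l + (Q l k - Q k l) • j) = 0) {u v : M}
    (huv : g u v = 0) : Q u v = 0 := by
  have hdouble : ∀ {u v}, g u v = 0 → 2 * Q v u = Q u v := fun {u v} huv => by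
    rcases eq_or_ne u 0 with rfl | hu
    · simp
    have h : (2 * Q v u - Q u v) * g u u = 0 := by
      have h := hskew u v u
      simp only [map_add, map_sub, map_smul, smul_eq_mul, huv] at h
      linear_combination h
    simpa [(hpos u hu).ne', sub_eq_zero] using h
  linarith [hdouble huv, hdouble ((hsymm v u).trans huv)]

end OrthogonalPairs

section Beltrami

variable {X Y : Type*} [NormedAddCommGroup X] [NormedSpace ℝ X] [NormedAddCommGroup Y]
  [NormedSpace ℝ Y]

/-- `φ` is an immersion of `V` carrying the geodesics of the torsion-free connection `Γ` to
straight lines, up to the reparametrization recorded by the one-form `P` (Weyl's relation between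
projectively equivalent connections). -/
structure IsFlatteningOn (φ : X → Y) (P : X → X →L[ℝ] ℝ) (Γ : X → X →L[ℝ] X →L[ℝ] X)
    (V : Set X) : Prop where
  contDiffOn : ContDiffOn ℝ ∞ φ V
  contDiffOn_form : ContDiffOn ℝ ∞ P V
  injective_fderiv : ∀ x ∈ V, Function.Injective (fderiv ℝ φ x)
  fderiv_fderiv : ∀ x ∈ V, ∀ u v, fderiv ℝ (fderiv ℝ φ) x u v =
    fderiv ℝ φ x (Γ x u v) + (P x u • fderiv ℝ φ x v + P x v • fderiv ℝ φ x u)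

/-- The bilinear form `∇P - P ⊗ P`, which for a flattening of `Γ` with one-form `P` is the
projective Schouten tensor of `Γ`. -/
def schoutenForm (Γ : X → X →L[ℝ] X →L[ℝ] X) (P : X → X →L[ℝ] ℝ) (x : X) : X →L[ℝ] X →L[ℝ] ℝ :=
  fderiv ℝ P x - ContinuousLinearMap.compL ℝ X X ℝ (P x) ∘L Γ x - (P x).smulRight (P x)

lemma schoutenForm_apply (Γ : X → X →L[ℝ] X →L[ℝ] X) (P : X → X →L[ℝ] ℝ) (x u v : X) :
    schoutenForm Γ P x u v = fderiv ℝ P x u v - P x (Γ x u v) - P x u * P x v := rfl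

variable {φ : X → Y} {P : X → X →L[ℝ] ℝ} {g : X → X →L[ℝ] X →L[ℝ] ℝ}
  {Γ : X → X →L[ℝ] X →L[ℝ] X} {V : Set X} {x : X}

namespace IsFlatteningOn

lemma curvature_eq (hφ : IsFlatteningOn φ P Γ V) (hΓ : IsLeviCivitaOn g Γ V) (hx : x ∈ V)
    (k l j : X) :
    curvature Γ x k l j = schoutenForm Γ P x l j • k - schoutenForm Γ P x k j • l +
      (schoutenForm Γ P x l k - schoutenForm Γ P x k l) • j := by
  have hφx : ContDiffAt ℝ 3 φ x :=
    (hφ.contDiffOn.contDiffAt (hΓ.isOpen.mem_nhds hx)).of_le ENat.LEInfty.out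
  have hDφ : ContDiffAt ℝ 2 (fderiv ℝ φ) x := hφx.fderiv_right (by norm_num)
  have hdDφ : DifferentiableAt ℝ (fderiv ℝ φ) x := hDφ.differentiableAt (by simp)
  have hdP : DifferentiableAt ℝ P x :=
    (hφ.contDiffOn_form.contDiffAt (hΓ.isOpen.mem_nhds hx)).differentiableAt (by simp)
  have hderiv : ∀ k l, fderiv ℝ (fun y => P y l • fderiv ℝ φ y j + P y j • fderiv ℝ φ y l) x k =
      P x l • fderiv ℝ (fderiv ℝ φ) x k j + fderiv ℝ P x k l • fderiv ℝ φ x j +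
      (P x j • fderiv ℝ (fderiv ℝ φ) x k l + fderiv ℝ P x k j • fderiv ℝ φ x l) := fun k l => by
    rw [fderiv_fun_add (by fun_prop) (by fun_prop), fderiv_fun_smul (by fun_prop) (by fun_prop),
      fderiv_fun_smul (by fun_prop) (by fun_prop)]
    simp [fderiv_clm_apply_const_apply hdP, fderiv_clm_apply_const_apply hdDφ]
  have hricci := ricci_identity hDφ (hΓ.differentiableAt_conn hx) (by fun_prop)
    (Filter.mem_of_superset (hΓ.isOpen.mem_nhds hx) hφ.fderiv_fderiv) k l j
  rw [hderiv, hderiv] at hricci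
  simp only [hφ.fderiv_fderiv x hx, hΓ.conn_symm x hx l k] at hricci
  apply hφ.injective_fderiv x hx
  rw [hricci]
  simp only [schoutenForm_apply, map_add, map_sub, map_smul, hΓ.conn_symm x hx l k]
  module

lemma schoutenForm_eq (hφ : IsFlatteningOn φ P Γ V) (hΓ : IsLeviCivitaOn g Γ V) (hx : x ∈ V)
    {e : X} (he : e ≠ 0) (u v : X) :
    schoutenForm Γ P x u v = schoutenForm Γ P x e e / g x e e * g x u v := by
  refine bilin_eq_div_mul_of_eq_zero_on_orthogonal (g := (g x).toLinearMap₁₂)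
    (Q := (schoutenForm Γ P x).toLinearMap₁₂) (hΓ.symm x hx) (hΓ.pos x hx)
    (fun u v => bilin_eq_zero_of_skew (hΓ.symm x hx) (hΓ.pos x hx) fun k l j => ?_) he u v
  have hskew := hΓ.curvature_skewAdjoint hx k l j j
  rw [hφ.curvature_eq hΓ hx, self_eq_neg] at hskew
  exact hskew

lemma curvature_eq_of_schoutenForm_eq (hφ : IsFlatteningOn φ P Γ V) (hΓ : IsLeviCivitaOn g Γ V)
    (hx : x ∈ V) {κ : ℝ} (hκ : ∀ u v, schoutenForm Γ P x u v = κ * g x u v) :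
    HasConstantCurvatureAt g Γ x κ := fun k l j => by
  rw [hφ.curvature_eq hΓ hx]
  simp only [hκ, hΓ.symm x hx l k]
  module

lemma fderiv_mul_comm_of_schoutenForm_eq (hφ : IsFlatteningOn φ P Γ V)
    (hΓ : IsLeviCivitaOn g Γ V) (hx : x ∈ V) {κ : X → ℝ} (hdκ : DifferentiableAt ℝ κ x)
    (hκ : ∀ y ∈ V, ∀ u v, schoutenForm Γ P y u v = κ y * g y u v) (k l j : X) :
    fderiv ℝ κ x k * g x l j = fderiv ℝ κ x l * g x k j := by
  have hP : ContDiffAt ℝ ∞ P x := hφ.contDiffOn_form.contDiffAt (hΓ.isOpen.mem_nhds hx)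
  have hdP : DifferentiableAt ℝ P x := hP.differentiableAt (by simp)
  have hdg := hΓ.differentiableAt hx
  have hDP : ∀ y ∈ V, ∀ l j, fderiv ℝ P y l j = P y (Γ y l j) + (P y l * P y j + κ y * g y l j) :=
    fun y hy l j => by rw [← hκ y hy, schoutenForm_apply]; ring
  have hderiv : ∀ k l, fderiv ℝ (fun y => P y l * P y j + κ y * g y l j) x k =
      P x l * fderiv ℝ P x k j + P x j * fderiv ℝ P x k l +
      (κ x * (g x (Γ x k l) j + g x l (Γ x k j)) + g x l j * fderiv ℝ κ x k) := fun k l => by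
    rw [fderiv_fun_add (by fun_prop) (by fun_prop), fderiv_fun_mul (by fun_prop) (by fun_prop),
      fderiv_fun_mul (by fun_prop) (by fun_prop)]
    simp [fderiv_clm_apply_const_apply hdP, fderiv_clm_apply_const_const_apply hdg,
      hΓ.fderiv_metric x hx]
  have hricci := ricci_identity (hP.of_le ENat.LEInfty.out) (hΓ.differentiableAt_conn hx)
    (by fun_prop) (Filter.mem_of_superset (hΓ.isOpen.mem_nhds hx) hDP) k l j
  rw [hφ.curvature_eq_of_schoutenForm_eq hΓ hx (hκ x hx), hderiv, hderiv] at hricci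
  simp only [hDP x hx, hΓ.conn_symm x hx l k, hΓ.symm x hx l k, map_smul, map_sub,
    smul_eq_mul] at hricci
  linear_combination hricci

lemma fderiv_eq_zero_of_schoutenForm_eq (hφ : IsFlatteningOn φ P Γ V)
    (hΓ : IsLeviCivitaOn g Γ V) (hx : x ∈ V) (hdim : 1 < Module.finrank ℝ X) {κ : X → ℝ}
    (hdκ : DifferentiableAt ℝ κ x)
    (hκ : ∀ y ∈ V, ∀ u v, schoutenForm Γ P y u v = κ y * g y u v) : fderiv ℝ κ x = 0 := by
  ext k
  rcases eq_or_ne k 0 with rfl | hk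
  · simp
  obtain ⟨l, hlk⟩ := exists_linearIndependent_pair_of_one_lt_finrank hdim hk
  have hcomb : fderiv ℝ κ x k • l - fderiv ℝ κ x l • k = 0 :=
    hΓ.eq_zero_of_forall hx fun j => by
      simp [hφ.fderiv_mul_comm_of_schoutenForm_eq hΓ hx hdκ hκ k l j]
  refine (LinearIndependent.pair_iff.mp hlk (-fderiv ℝ κ x l) (fderiv ℝ κ x k) ?_).2
  rw [← hcomb]
  module

lemma differentiableAt_schoutenForm (hφ : IsFlatteningOn φ P Γ V) (hΓ : IsLeviCivitaOn g Γ V)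
    (hx : x ∈ V) (u v : X) : DifferentiableAt ℝ (fun y => schoutenForm Γ P y u v) x := by
  have hP : ContDiffAt ℝ 2 P x :=
    (hφ.contDiffOn_form.contDiffAt (hΓ.isOpen.mem_nhds hx)).of_le ENat.LEInfty.out
  have hdDP : DifferentiableAt ℝ (fderiv ℝ P) x :=
    (hP.fderiv_right (m := 1) (by norm_num)).differentiableAt (by simp)
  have hdP : DifferentiableAt ℝ P x := hP.differentiableAt (by simp)
  have hdΓ := hΓ.differentiableAt_conn hx
  simp only [schoutenForm_apply]
  fun_prop

theorem exists_hasConstantCurvatureAt (hφ : IsFlatteningOn φ P Γ V) (hΓ : IsLeviCivitaOn g Γ V)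
    (hdim : 1 < Module.finrank ℝ X) (hx : x ∈ V) :
    ∃ c, ∀ᶠ y in 𝓝 x, HasConstantCurvatureAt g Γ y c := by
  have : Nontrivial X := Module.nontrivial_of_finrank_pos (zero_lt_one.trans hdim)
  obtain ⟨e, he⟩ := exists_ne (0 : X)
  let κ : X → ℝ := fun y => schoutenForm Γ P y e e / g y e e
  have hκ : ∀ y ∈ V, ∀ u v, schoutenForm Γ P y u v = κ y * g y u v :=
    fun y hy => hφ.schoutenForm_eq hΓ hy he
  have hdκ : ∀ y ∈ V, DifferentiableAt ℝ κ y := fun y hy => by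
    have hdg := hΓ.differentiableAt hy
    have hdQ := hφ.differentiableAt_schoutenForm hΓ hy e e
    have hgee := (hΓ.pos y hy e he).ne'
    fun_prop (disch := exact hgee)
  obtain ⟨r, hr, hball⟩ := Metric.isOpen_iff.mp hΓ.isOpen x hx
  obtain ⟨c, hc⟩ := isOpen_ball.exists_is_const_of_fderiv_eq_zero
    (convex_ball x r).isPreconnected
    (fun y hy => (hdκ y (hball hy)).differentiableWithinAt)
    fun y hy => hφ.fderiv_eq_zero_of_schoutenForm_eq hΓ (hball hy) hdim (hdκ y (hball hy)) hκ
  refine ⟨c, Filter.mem_of_superset (ball_mem_nhds x hr) fun y hy => ?_⟩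
  exact hc y hy ▸ hφ.curvature_eq_of_schoutenForm_eq hΓ (hball hy) (hκ y (hball hy))

end IsFlatteningOn

end Beltrami

section QuadraticDirection

variable {𝕜 M : Type*} [Field 𝕜] [CharZero 𝕜] [AddCommGroup M] [Module 𝕜 M]
  {B : M →ₗ[𝕜] M →ₗ[𝕜] M}

lemma bilin_eq_smul_add_smul_of_diag (hsymm : ∀ u v, B u v = B v u) {s : M → 𝕜}
    (hs : ∀ y, B y y = (2 * s y) • y) (hs₀ : s 0 = 0) (u v : M) :
    B u v = s u • v + s v • u := by
  rcases eq_or_ne u 0 with rfl | hu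
  · simp [hs₀]
  by_cases huv : LinearIndependent 𝕜 ![u, v]
  · have hplus := hs (u + v)
    have hminus := hs (u - v)
    simp only [map_add, map_sub, LinearMap.add_apply, LinearMap.sub_apply, hs, hsymm v u]
      at hplus hminus
    obtain ⟨hsu, hsv⟩ := LinearIndependent.pair_iff.mp huv
      (2 * s u - s (u + v) - s (u - v)) (2 * s v - s (u + v) + s (u - v))
      (by linear_combination (norm := module) (1 / 2 : 𝕜) • (hplus + hminus))
    have hsum : s (u + v) = s u + s v := by linear_combination (-1 / 2) * (hsu + hsv)
    rw [hsum] at hplus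
    linear_combination (norm := module) (1 / 2 : 𝕜) • hplus
  · rw [LinearIndependent.pair_iff' hu] at huv
    push Not at huv
    obtain ⟨r, rfl⟩ := huv
    rcases eq_or_ne r 0 with rfl | hr
    · simp [hs₀]
    have hscale : s (r • u) = r * s u := by
      have h : (2 * r * (r * s u - s (r • u))) • u = 0 := by
        have h := hs (r • u)
        simp only [map_smul, LinearMap.smul_apply, hs] at h
        linear_combination (norm := module) h
      have h := (smul_eq_zero.mp h).resolve_right hu
      simp only [mul_eq_zero, two_ne_zero, hr, false_or, sub_eq_zero] at h
      exact h.symm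
    rw [map_smul, hs, hscale]
    module

lemma exists_linearMap_eq_smul_add_smul (hsymm : ∀ u v, B u v = B v u)
    (hdiag : ∀ y, ∃ s : 𝕜, B y y = s • y) :
    ∃ P : M →ₗ[𝕜] 𝕜, ∀ u v, B u v = P u • v + P v • u := by
  rcases subsingleton_or_nontrivial M with _ | _
  · exact ⟨0, fun u v => Subsingleton.elim _ _⟩
  have hdiag' : ∀ y, ∃ s : 𝕜, B y y = (2 * s) • y ∧ (y = 0 → s = 0) := fun y => by
    rcases eq_or_ne y 0 with rfl | hy
    · exact ⟨0, by simp⟩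
    obtain ⟨s, hs⟩ := hdiag y
    exact ⟨s / 2, by rw [hs, mul_div_cancel₀ s two_ne_zero], fun h => absurd h hy⟩
  choose s hs hs₀ using hdiag'
  have hB := bilin_eq_smul_add_smul_of_diag hsymm hs (hs₀ 0 rfl)
  obtain ⟨e, he⟩ := exists_ne (0 : M)
  refine ⟨⟨⟨s, fun u v => smul_left_injective 𝕜 he ?_⟩, fun r u => smul_left_injective 𝕜 he ?_⟩, hB⟩
  · have h := map_add (B e) u v
    simp only [hB] at h
    linear_combination (norm := module) h
  · have h := map_smul (B e) r u
    simp only [hB] at h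
    simp only [RingHom.id_apply, smul_eq_mul]
    linear_combination (norm := module) h

lemma bilin_eq_trace_smul_add_trace_smul [FiniteDimensional 𝕜 M]
    (hsymm : ∀ u v, B u v = B v u) (hdiag : ∀ y, ∃ s : 𝕜, B y y = s • y) (u v : M) :
    ((Module.finrank 𝕜 M : 𝕜) + 1) • B u v =
      LinearMap.trace 𝕜 M (B u) • v + LinearMap.trace 𝕜 M (B v) • u := by
  obtain ⟨P, hP⟩ := exists_linearMap_eq_smul_add_smul hsymm hdiag
  have htrace : ∀ u, LinearMap.trace 𝕜 M (B u) = (Module.finrank 𝕜 M + 1) * P u := fun u => by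
    have hBu : B u = P u • LinearMap.id + P.smulRight u := LinearMap.ext fun v => hP u v
    simp only [hBu, map_add, map_smul, LinearMap.trace_id, LinearMap.trace_smulRight, smul_eq_mul]
    ring
  rw [htrace, htrace, hP]
  module

end QuadraticDirection

section Charts

variable {X Y : Type*} [NormedAddCommGroup X] [NormedSpace ℝ X] [NormedAddCommGroup Y]
  [NormedSpace ℝ Y]

/-- `φ` is a smooth diffeomorphism of the open set `V` onto the open set `φ '' V`, with inverse
`ψ`. -/
structure IsSmoothChartOn (φ : X → Y) (ψ : Y → X) (V : Set X) : Prop where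
  isOpen : IsOpen V
  contDiffOn : ContDiffOn ℝ ∞ φ V
  isOpen_image : IsOpen (φ '' V)
  contDiffOn_symm : ContDiffOn ℝ ∞ ψ (φ '' V)
  leftInvOn : LeftInvOn ψ φ V

/-- `φ` sends every `Γ`-geodesic in `V`, a solution of `x'' + Γ(x', x') = 0`, to a curve whose
acceleration is a multiple of its velocity. -/
def FlattensGeodesicsOn (φ : X → Y) (Γ : X → X →L[ℝ] X →L[ℝ] X) (V : Set X) : Prop :=
  ∀ x ∈ V, ∀ y, ∃ s : ℝ,
    fderiv ℝ (fderiv ℝ φ) x y y = fderiv ℝ φ x (Γ x y y) + s • fderiv ℝ φ x y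

/-- The difference between the flat connection of the chart `φ` with inverse `ψ` and the
connection `Γ`. -/
def connectionDefect (φ : X → Y) (ψ : Y → X) (Γ : X → X →L[ℝ] X →L[ℝ] X) (x : X) :
    X →L[ℝ] X →L[ℝ] X :=
  ContinuousLinearMap.compL ℝ X Y X (fderiv ℝ ψ (φ x)) ∘L fderiv ℝ (fderiv ℝ φ) x - Γ x

lemma connectionDefect_apply (φ : X → Y) (ψ : Y → X) (Γ : X → X →L[ℝ] X →L[ℝ] X) (x u v : X) :
    connectionDefect φ ψ Γ x u v =
      fderiv ℝ ψ (φ x) (fderiv ℝ (fderiv ℝ φ) x u v) - Γ x u v := rfl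

variable {φ : X → Y} {ψ : Y → X} {Γ : X → X →L[ℝ] X →L[ℝ] X} {V : Set X} {x : X}

namespace IsSmoothChartOn

lemma contDiffAt (hφ : IsSmoothChartOn φ ψ V) (hx : x ∈ V) : ContDiffAt ℝ ∞ φ x :=
  hφ.contDiffOn.contDiffAt (hφ.isOpen.mem_nhds hx)

lemma contDiffAt_symm (hφ : IsSmoothChartOn φ ψ V) (hx : x ∈ V) : ContDiffAt ℝ ∞ ψ (φ x) :=
  hφ.contDiffOn_symm.contDiffAt (hφ.isOpen_image.mem_nhds (mem_image_of_mem φ hx))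

lemma differentiableAt (hφ : IsSmoothChartOn φ ψ V) (hx : x ∈ V) : DifferentiableAt ℝ φ x :=
  (hφ.contDiffAt hx).differentiableAt (by simp)

lemma differentiableAt_symm (hφ : IsSmoothChartOn φ ψ V) (hx : x ∈ V) :
    DifferentiableAt ℝ ψ (φ x) :=
  (hφ.contDiffAt_symm hx).differentiableAt (by simp)

lemma contDiffOn_fderiv (hφ : IsSmoothChartOn φ ψ V) : ContDiffOn ℝ ∞ (fderiv ℝ φ) V :=
  hφ.contDiffOn.fderiv_of_isOpen hφ.isOpen (by simp)

lemma contDiffOn_fderiv_symm (hφ : IsSmoothChartOn φ ψ V) :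
    ContDiffOn ℝ ∞ (fderiv ℝ ψ) (φ '' V) :=
  hφ.contDiffOn_symm.fderiv_of_isOpen hφ.isOpen_image (by simp)

lemma fderiv_symm_fderiv (hφ : IsSmoothChartOn φ ψ V) (hx : x ∈ V) (v : X) :
    fderiv ℝ ψ (φ x) (fderiv ℝ φ x v) = v := by
  have hid : ψ ∘ φ =ᶠ[𝓝 x] id := mem_of_superset (hφ.isOpen.mem_nhds hx) hφ.leftInvOn
  have hfderiv := hid.fderiv_eq (𝕜 := ℝ)
  rw [fderiv_comp x (hφ.differentiableAt_symm hx) (hφ.differentiableAt hx), fderiv_id] at hfderiv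
  exact congr($hfderiv v)

lemma fderiv_fderiv_symm (hφ : IsSmoothChartOn φ ψ V) (hx : x ∈ V) (w : Y) :
    fderiv ℝ φ x (fderiv ℝ ψ (φ x) w) = w := by
  have hid : φ ∘ ψ =ᶠ[𝓝 (φ x)] id :=
    mem_of_superset (hφ.isOpen_image.mem_nhds (mem_image_of_mem φ hx)) hφ.leftInvOn.rightInvOn_image
  have hfderiv := hid.fderiv_eq (𝕜 := ℝ)
  rw [fderiv_comp (φ x) ((hφ.leftInvOn hx).symm ▸ hφ.differentiableAt hx)
    (hφ.differentiableAt_symm hx), fderiv_id, hφ.leftInvOn hx] at hfderiv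
  exact congr($hfderiv w)

lemma injective_fderiv (hφ : IsSmoothChartOn φ ψ V) (hx : x ∈ V) :
    Function.Injective (fderiv ℝ φ x) :=
  Function.LeftInverse.injective (hφ.fderiv_symm_fderiv hx)

lemma surjective_fderiv (hφ : IsSmoothChartOn φ ψ V) (hx : x ∈ V) :
    Function.Surjective (fderiv ℝ φ x) :=
  Function.RightInverse.surjective (hφ.fderiv_fderiv_symm hx)

lemma contDiffOn_connectionDefect (hφ : IsSmoothChartOn φ ψ V) (hΓ : ContDiffOn ℝ ∞ Γ V) :
    ContDiffOn ℝ ∞ (connectionDefect φ ψ Γ) V :=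
  (((ContinuousLinearMap.compL ℝ X Y X).contDiff.comp_contDiffOn
    (hφ.contDiffOn_fderiv_symm.comp hφ.contDiffOn (mapsTo_image φ V))).clm_comp
    (hφ.contDiffOn_fderiv.fderiv_of_isOpen hφ.isOpen (by simp))).sub hΓ

theorem exists_isFlatteningOn [FiniteDimensional ℝ X] (hφ : IsSmoothChartOn φ ψ V)
    (hΓ : ContDiffOn ℝ ∞ Γ V) (hsymm : ∀ x ∈ V, ∀ u v, Γ x u v = Γ x v u)
    (hflat : FlattensGeodesicsOn φ Γ V) : ∃ P, IsFlatteningOn φ P Γ V := by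
  let B := connectionDefect φ ψ Γ
  let traceCLM : (X →L[ℝ] X) →L[ℝ] ℝ :=
    LinearMap.toContinuousLinearMap (LinearMap.trace ℝ X ∘ₗ ContinuousLinearMap.coeLM ℝ)
  let P : X → X →L[ℝ] ℝ := fun x => ((Module.finrank ℝ X : ℝ) + 1)⁻¹ • traceCLM ∘L B x
  refine ⟨P, hφ.contDiffOn,
    (contDiffOn_const.clm_comp (hφ.contDiffOn_connectionDefect hΓ)).const_smul _,
    fun x hx => hφ.injective_fderiv hx, fun x hx u v => ?_⟩
  have hBsymm : ∀ u v, B x u v = B x v u := fun u v => by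
    simp only [B, connectionDefect_apply, hsymm x hx u v,
      fderiv_fderiv_comm ((hφ.contDiffAt hx).of_le ENat.LEInfty.out) u v]
  have hBdiag : ∀ y, ∃ s : ℝ, B x y y = s • y := fun y => by
    obtain ⟨s, hs⟩ := hflat x hx y
    exact ⟨s, by simp [B, connectionDefect_apply, hs, hφ.fderiv_symm_fderiv hx]⟩
  have hBP : B x u v = P x u • v + P x v • u := by
    have htrace := bilin_eq_trace_smul_add_trace_smul
      (B := ContinuousLinearMap.coeLM ℝ ∘ₗ (B x).toLinearMap) hBsymm hBdiag u v
    have hne : (Module.finrank ℝ X : ℝ) + 1 ≠ 0 := Nat.cast_add_one_ne_zero _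
    rw [← inv_smul_smul₀ hne (B x u v)]
    refine (congrArg _ htrace).trans ?_
    rw [smul_add, smul_smul, smul_smul]
    rfl
  have hDφ := congrArg (fderiv ℝ φ x) hBP
  simp only [B, connectionDefect_apply, map_sub, map_add, map_smul,
    hφ.fderiv_fderiv_symm hx] at hDφ
  exact sub_eq_iff_eq_add'.mp hDφ

end IsSmoothChartOn

end Charts

section Obata

variable {X T : Type*} [NormedAddCommGroup X] [NormedSpace ℝ X] [NormedAddCommGroup T]
  [NormedSpace ℝ T]

lemma contDiffOn_of_hasFDerivAt_linear {W : Type*} [NormedAddCommGroup W] [NormedSpace ℝ W]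
    {A : X → X →L[ℝ] W →L[ℝ] W} {w : X → W} {V : Set X} (hV : IsOpen V)
    (hA : ContDiffOn ℝ ∞ A V) (hw : ∀ x ∈ V, HasFDerivAt w ((A x).flip (w x)) x) :
    ContDiffOn ℝ ∞ w V := by
  have hflip : ContDiffOn ℝ ∞ (fun x => (A x).flip) V :=
    (ContinuousLinearMap.flipₗᵢ ℝ X W W).contDiff.comp_contDiffOn hA
  refine contDiffOn_infty.2 fun n => ?_
  induction n with
  | zero => exact contDiffOn_zero.2 fun x hx => (hw x hx).continuousAt.continuousWithinAt
  | succ n ih =>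
    rw [Nat.cast_succ, contDiffOn_succ_iff_fderiv_of_isOpen hV]
    refine ⟨fun x hx => (hw x hx).differentiableAt.differentiableWithinAt, by simp, ?_⟩
    exact ((hflip.of_le ENat.LEInfty.out).clm_apply ih).congr fun x hx => (hw x hx).fderiv

/-- `f` is a smooth solution on `V` of the system `∇² f = -c f g`. -/
structure IsObataSolutionOn (g : X → X →L[ℝ] X →L[ℝ] ℝ) (Γ : X → X →L[ℝ] X →L[ℝ] X) (c : ℝ)
    (f : X → T) (V : Set X) : Prop where
  contDiffOn : ContDiffOn ℝ ∞ f V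
  fderiv_fderiv : ∀ x ∈ V, ∀ u v,
    fderiv ℝ (fderiv ℝ f) x u v = fderiv ℝ f x (Γ x u v) - (c * g x u v) • f x

/-- The coefficients of `∇² f = -c f g` written as a first-order linear system for the pair
`(f, fderiv ℝ f)`. -/
def obataSystem (T : Type*) [NormedAddCommGroup T] [NormedSpace ℝ T]
    (g : X → X →L[ℝ] X →L[ℝ] ℝ) (Γ : X → X →L[ℝ] X →L[ℝ] X) (c : ℝ) (x : X) :
    X →L[ℝ] (T × (X →L[ℝ] T)) →L[ℝ] T × (X →L[ℝ] T) :=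
  let fst := ContinuousLinearMap.fst ℝ T (X →L[ℝ] T)
  let snd := ContinuousLinearMap.snd ℝ T (X →L[ℝ] T)
  let inl := ContinuousLinearMap.inl ℝ T (X →L[ℝ] T)
  let inr := ContinuousLinearMap.inr ℝ T (X →L[ℝ] T)
  inl.postcomp _ ∘L snd.precomp T ∘L ContinuousLinearMap.apply ℝ T +
    (ContinuousLinearMap.compL ℝ X (X →L[ℝ] X) _
        (inr.postcomp _ ∘L snd.precomp _ ∘L (ContinuousLinearMap.compL ℝ X X T).flip) (Γ x) -
      c • ContinuousLinearMap.compL ℝ X (X →L[ℝ] ℝ) _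
        (inr.postcomp _ ∘L fst.precomp _ ∘L ContinuousLinearMap.smulRightL ℝ X T) (g x))

variable {g : X → X →L[ℝ] X →L[ℝ] ℝ} {Γ : X → X →L[ℝ] X →L[ℝ] X} {c : ℝ} {U V : Set X}
  {x x₀ : X}

lemma IsObataSolutionOn.mono {f : X → T} (hf : IsObataSolutionOn g Γ c f U) (hVU : V ⊆ U) :
    IsObataSolutionOn g Γ c f V :=
  ⟨hf.contDiffOn.mono hVU, fun x hx => hf.fderiv_fderiv x (hVU hx)⟩

lemma obataSystem_apply (h : X) (w : T × (X →L[ℝ] T)) :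
    obataSystem T g Γ c x h w = (w.2 h, w.2 ∘L Γ x h - c • (g x h).smulRight w.1) := by
  refine Prod.ext ?_ (ContinuousLinearMap.ext fun m => ?_) <;> simp [obataSystem]

lemma contDiffOn_obataSystem (hΓ : IsLeviCivitaOn g Γ U) :
    ContDiffOn ℝ ∞ (obataSystem T g Γ c) U :=
  contDiffOn_const.add (((ContinuousLinearMap.contDiff _).comp_contDiffOn hΓ.contDiffOn_conn).sub
    (((ContinuousLinearMap.contDiff _).comp_contDiffOn hΓ.contDiffOn).const_smul c))

lemma fderiv_obataSystem_apply (hΓ : IsLeviCivitaOn g Γ U) (hx : x ∈ U) (k h : X)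
    (w : T × (X →L[ℝ] T)) :
    fderiv ℝ (obataSystem T g Γ c) x k h w =
      (0, w.2 ∘L fderiv ℝ Γ x k h - c • (fderiv ℝ g x k h).smulRight w.1) := by
  have hdA : DifferentiableAt ℝ (obataSystem T g Γ c) x :=
    ((contDiffOn_obataSystem (T := T) (c := c) hΓ).contDiffAt
      (hΓ.isOpen.mem_nhds hx)).differentiableAt (by simp)
  have hdg := hΓ.differentiableAt hx
  have hdΓ := hΓ.differentiableAt_conn hx
  let L : (X →L[ℝ] X) →L[ℝ] X →L[ℝ] T := ContinuousLinearMap.compL ℝ X X T w.2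
  let K : (X →L[ℝ] ℝ) →L[ℝ] X →L[ℝ] T := (ContinuousLinearMap.smulRightL ℝ X T).flip w.1
  have hL : HasFDerivAt (fun y => L (Γ y h)) (L ∘L (fderiv ℝ Γ x).flip h) x :=
    L.hasFDerivAt.comp x (by simpa using hdΓ.hasFDerivAt.clm_apply (hasFDerivAt_const h x))
  have hK : HasFDerivAt (fun y => K (g y h)) (K ∘L (fderiv ℝ g x).flip h) x :=
    K.hasFDerivAt.comp x (by simpa using hdg.hasFDerivAt.clm_apply (hasFDerivAt_const h x))
  have hderiv := ((hasFDerivAt_const (w.2 h) x).prodMk (hL.sub (hK.const_smul c))).fderiv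
  rw [← fderiv_clm_apply_const_const_apply hdA]
  simp only [obataSystem_apply]
  exact congr($hderiv k)

lemma isFlatAt_obataSystem (hΓ : IsLeviCivitaOn g Γ U) (hx : x ∈ U)
    (hc : HasConstantCurvatureAt g Γ x c) : IsFlatAt (obataSystem T g Γ c) x := by
  intro h k w
  simp only [fderiv_obataSystem_apply hΓ hx, obataSystem_apply]
  ext m
  · simp [hΓ.conn_symm x hx k h, hΓ.symm x hx k h]
  · have hcurv := congrArg w.2 (hc k h m)
    simp only [curvature_apply, map_add, map_sub, map_smul] at hcurv
    simp only [Prod.snd_add, add_apply, sub_apply, smul_apply, ContinuousLinearMap.comp_apply,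
      ContinuousLinearMap.smulRight_apply, hΓ.fderiv_metric x hx, hΓ.conn_symm x hx k h,
      hΓ.symm x hx k (Γ x h m), hΓ.symm x hx h (Γ x k m)]
    linear_combination (norm := module) hcurv

theorem exists_isObataSolutionOn [CompleteSpace T] (hΓ : IsLeviCivitaOn g Γ U)
    (hc : ∀ x ∈ U, HasConstantCurvatureAt g Γ x c) (hx₀ : x₀ ∈ U) (a : T) (α : X →L[ℝ] T) :
    ∃ f : X → T, f x₀ = a ∧ fderiv ℝ f x₀ = α ∧
      ∃ V ⊆ U, IsOpen V ∧ x₀ ∈ V ∧ IsObataSolutionOn g Γ c f V := by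
  have hA := contDiffOn_obataSystem (T := T) (c := c) hΓ
  have hU : ∀ᶠ x in 𝓝 x₀, x ∈ U := hΓ.isOpen.mem_nhds hx₀
  obtain ⟨w, hw₀, hw⟩ := exists_hasFDerivAt_of_isFlatAt
    ((hA.contDiffAt hU).of_le ENat.LEInfty.out)
    (mem_of_superset hU fun x hx => isFlatAt_obataSystem hΓ hx (hc x hx)) (a, α)
  obtain ⟨V, hVw, hV, hx₀V⟩ := _root_.eventually_nhds_iff.mp (hw.and hU)
  have hderiv : ∀ x ∈ V, fderiv ℝ (fun y => (w y).1) x = (w x).2 := fun x hx => by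
    ext v
    rw [(hVw x hx).1.fst.fderiv]
    simp [obataSystem_apply]
  refine ⟨fun y => (w y).1, by simp [hw₀], by simp [hderiv x₀ hx₀V, hw₀], V,
    fun x hx => (hVw x hx).2, hV, hx₀V, ?_, fun x hx u v => ?_⟩
  · exact (contDiffOn_of_hasFDerivAt_linear hV (hA.mono fun x hx => (hVw x hx).2)
      fun x hx => (hVw x hx).1).fst
  · have hderiv_near : fderiv ℝ (fun y => (w y).1) =ᶠ[𝓝 x] fun y => (w y).2 :=
      mem_of_superset (hV.mem_nhds hx) hderiv
    rw [hderiv_near.fderiv_eq, hderiv x hx, (hVw x hx).1.snd.fderiv]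
    simp [obataSystem_apply, mul_smul]

lemma fderiv_fderiv_smul_apply {a : X → ℝ} {φ : X → T} (ha : ContDiffAt ℝ 2 a x)
    (hφ : ContDiffAt ℝ 2 φ x) (k l : X) :
    fderiv ℝ (fderiv ℝ fun y => a y • φ y) x k l =
      a x • fderiv ℝ (fderiv ℝ φ) x k l + fderiv ℝ a x k • fderiv ℝ φ x l +
      (fderiv ℝ a x l • fderiv ℝ φ x k + fderiv ℝ (fderiv ℝ a) x k l • φ x) := by
  have hda := ha.differentiableAt (by simp)
  have hdφ := hφ.differentiableAt (by simp)
  have hdDa := (ha.fderiv_right (m := 1) (by norm_num)).differentiableAt (by simp)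
  have hdDφ := (hφ.fderiv_right (m := 1) (by norm_num)).differentiableAt (by simp)
  have hdD : DifferentiableAt ℝ (fderiv ℝ fun y => a y • φ y) x :=
    ((ha.smul hφ).fderiv_right (m := 1) (by norm_num)).differentiableAt (by simp)
  have hnear : (fun y => fderiv ℝ (fun z => a z • φ z) y l) =ᶠ[𝓝 x]
      fun y => a y • fderiv ℝ φ y l + fderiv ℝ a y l • φ y := by
    filter_upwards [ha.eventually (by simp), hφ.eventually (by simp)] with y hay hφy
    rw [fderiv_fun_smul (hay.differentiableAt (by simp)) (hφy.differentiableAt (by simp))]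
    rfl
  rw [← fderiv_clm_apply_const_apply hdD, hnear.fderiv_eq,
    fderiv_fun_add (by fun_prop) (by fun_prop), fderiv_fun_smul (by fun_prop) (by fun_prop),
    fderiv_fun_smul (by fun_prop) (by fun_prop)]
  simp [fderiv_clm_apply_const_apply hdDa, fderiv_clm_apply_const_apply hdDφ]

lemma IsObataSolutionOn.flattensGeodesicsOn {f₀ : X → ℝ} {f : X → T} (hV : IsOpen V)
    (hf₀ : IsObataSolutionOn g Γ c f₀ V) (hf : IsObataSolutionOn g Γ c f V)
    (hne : ∀ x ∈ V, f₀ x ≠ 0) : FlattensGeodesicsOn (fun x => (f₀ x)⁻¹ • f x) Γ V := by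
  intro x hx y
  have hsmooth₀ : ContDiffAt ℝ 2 f₀ x :=
    (hf₀.contDiffOn.contDiffAt (hV.mem_nhds hx)).of_le ENat.LEInfty.out
  have hsmooth : ContDiffAt ℝ 2 f x :=
    (hf.contDiffOn.contDiffAt (hV.mem_nhds hx)).of_le ENat.LEInfty.out
  have hφ : ContDiffAt ℝ 2 (fun y => (f₀ y)⁻¹ • f y) x := (hsmooth₀.inv (hne x hx)).smul hsmooth
  have hfactor : f =ᶠ[𝓝 x] fun z => f₀ z • (f₀ z)⁻¹ • f z :=
    mem_of_superset (hV.mem_nhds hx) fun z hz => (smul_inv_smul₀ (hne z hz) (f z)).symm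
  have hhess := hf.fderiv_fderiv x hx y y
  rw [hfactor.fderiv.fderiv_eq, fderiv_fderiv_smul_apply hsmooth₀ hφ, hf₀.fderiv_fderiv x hx,
    hfactor.fderiv_eq, fderiv_fun_smul (hsmooth₀.differentiableAt (by simp))
      (hφ.differentiableAt (by simp))] at hhess
  refine ⟨-(2 * fderiv ℝ f₀ x y / f₀ x), smul_right_injective T (hne x hx) ?_⟩
  have hfx := hfactor.self_of_nhds
  simp only [add_apply, smul_apply, ContinuousLinearMap.smulRight_apply] at hhess
  simp only [smul_add, smul_smul, mul_neg, mul_div_cancel₀ _ (hne x hx)]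
  linear_combination (norm := module) hhess - (c * g x y y) • hfx

lemma exists_isSmoothChartOn [CompleteSpace X] {φ : X → T} (hV : IsOpen V)
    (hφ : ContDiffOn ℝ ∞ φ V) (hx₀ : x₀ ∈ V) (L : X ≃L[ℝ] T) (hL : fderiv ℝ φ x₀ = L) :
    ∃ ψ, ∃ W ⊆ V, x₀ ∈ W ∧ IsSmoothChartOn φ ψ W := by
  have hφx₀ : ContDiffAt ℝ ∞ φ x₀ := hφ.contDiffAt (hV.mem_nhds hx₀)
  have hfd : HasFDerivAt φ (L : X →L[ℝ] T) x₀ :=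
    hL ▸ (hφx₀.differentiableAt (by simp)).hasFDerivAt
  let e := hφx₀.toOpenPartialHomeomorph φ hfd (by simp)
  let W : Set X := e.source ∩ (V ∩ fderiv ℝ φ ⁻¹' range ((↑) : (X ≃L[ℝ] T) → X →L[ℝ] T))
  have hW : IsOpen W := e.open_source.inter <|
    (hφ.fderiv_of_isOpen hV (m := ∞) (by simp)).continuousOn.isOpen_inter_preimage hV
      ContinuousLinearEquiv.isOpen
  refine ⟨e.symm, W, fun x hx => hx.2.1,
    ⟨hφx₀.mem_toOpenPartialHomeomorph_source hfd (by simp), hx₀, L, hL.symm⟩,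
    hW, hφ.mono fun x hx => hx.2.1, e.isOpen_image_of_subset_source hW fun x hx => hx.1, ?_,
    fun x hx => e.left_inv hx.1⟩
  rintro _ ⟨x, ⟨hxe, hxV, M, hM⟩, rfl⟩
  have hφx : ContDiffAt ℝ ∞ φ x := hφ.contDiffAt (hV.mem_nhds hxV)
  have hsymm : e.symm (e x) = x := e.left_inv hxe
  refine (e.contDiffAt_symm (f₀' := M) (e.map_source hxe) ?_ ?_).contDiffWithinAt
  · rw [hsymm, hM]
    exact (hφx.differentiableAt (by simp)).hasFDerivAt
  · rwa [hsymm]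

theorem exists_isSmoothChartOn_flattensGeodesicsOn [CompleteSpace X] (hΓ : IsLeviCivitaOn g Γ U)
    (hc : ∀ x ∈ U, HasConstantCurvatureAt g Γ x c) (hx₀ : x₀ ∈ U) :
    ∃ (φ ψ : X → X), ∃ V ⊆ U, x₀ ∈ V ∧ IsSmoothChartOn φ ψ V ∧ FlattensGeodesicsOn φ Γ V := by
  obtain ⟨f₀, hf₀x₀, hDf₀, V₀, -, hV₀, hx₀V₀, hf₀⟩ :=
    exists_isObataSolutionOn hΓ hc hx₀ (1 : ℝ) 0
  obtain ⟨f, hfx₀, hDf, V, hVU, hV, hx₀V, hf⟩ :=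
    exists_isObataSolutionOn hΓ hc hx₀ (0 : X) (ContinuousLinearMap.id ℝ X)
  let V' : Set X := V ∩ (V₀ ∩ f₀ ⁻¹' {0}ᶜ)
  have hV' : IsOpen V' :=
    hV.inter (hf₀.contDiffOn.continuousOn.isOpen_inter_preimage hV₀ isOpen_compl_singleton)
  have hne : ∀ x ∈ V', f₀ x ≠ 0 := fun x hx => hx.2.2
  have hx₀V' : x₀ ∈ V' := ⟨hx₀V, hx₀V₀, by simp [hf₀x₀]⟩
  replace hf₀ := hf₀.mono fun x (hx : x ∈ V') => hx.2.1
  replace hf := hf.mono fun x (hx : x ∈ V') => hx.1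
  have hd₀ : HasFDerivAt f₀ (0 : X →L[ℝ] ℝ) x₀ := hDf₀ ▸
    ((hf₀.contDiffOn.contDiffAt (hV'.mem_nhds hx₀V')).differentiableAt (by simp)).hasFDerivAt
  have hd : HasFDerivAt f (ContinuousLinearMap.id ℝ X) x₀ := hDf ▸
    ((hf.contDiffOn.contDiffAt (hV'.mem_nhds hx₀V')).differentiableAt (by simp)).hasFDerivAt
  have hDφ : fderiv ℝ (fun x => (f₀ x)⁻¹ • f x) x₀ = ContinuousLinearEquiv.refl ℝ X := by
    have hinv := (hasDerivAt_inv (hne x₀ hx₀V')).comp_hasFDerivAt x₀ hd₀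
    refine (hinv.smul hd).fderiv.trans ?_
    ext v
    simp [hf₀x₀, hfx₀]
  obtain ⟨ψ, W, hWV', hx₀W, hφ⟩ := exists_isSmoothChartOn hV'
    ((hf₀.contDiffOn.inv hne).smul hf.contDiffOn) hx₀V' (.refl ℝ X) hDφ
  exact ⟨_, ψ, W, fun x hx => hVU (hWV' hx).1, hx₀W, hφ,
    fun x hx => hf₀.flattensGeodesicsOn hV' hf hne x (hWV' hx)⟩

end Obata

section Hamel

lemma isOpen_setOf_fst_mem_and_snd_ne_zero {X Y : Type*} [TopologicalSpace X] [TopologicalSpace Y]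
    [T1Space Y] [Zero Y] {U : Set X} (hU : IsOpen U) : IsOpen {p : X × Y | p.1 ∈ U ∧ p.2 ≠ 0} :=
  hU.prod isOpen_compl_singleton

variable {X Y : Type*} [NormedAddCommGroup X] [NormedSpace ℝ X] [NormedAddCommGroup Y]
  [NormedSpace ℝ Y]

/-- The Finsler function `(x, y) ↦ √(g_x(y, y))` of a Riemannian metric `g`. -/
def finslerOfMetric (g : X → X →L[ℝ] X →L[ℝ] ℝ) (p : X × X) : ℝ := √(g p.1 p.2 p.2)

/-- The Hamel equations for `F` at the point `p = (x, y)`, contracted with a vector `v` in place of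
the index `i`. -/
def HamelAt (F : X × X → ℝ) (p : X × X) : Prop :=
  ∀ v, fderiv ℝ (fderiv ℝ F) p (p.2, 0) (0, v) = fderiv ℝ (fderiv ℝ F) p (v, 0) (0, p.2)

/-- The metric induced by `g` along the map `φ`. -/
def pullbackMetric (φ : X → Y) (g : Y → Y →L[ℝ] Y →L[ℝ] ℝ) (x : X) : X →L[ℝ] X →L[ℝ] ℝ :=
  (g (φ x)).bilinearComp (fderiv ℝ φ x) (fderiv ℝ φ x)

lemma pullbackMetric_apply (φ : X → Y) (g : Y → Y →L[ℝ] Y →L[ℝ] ℝ) (x u v : X) :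
    pullbackMetric φ g x u v = g (φ x) (fderiv ℝ φ x u) (fderiv ℝ φ x v) := rfl

lemma fderiv_prodMk_left_apply {F : X × X → ℝ} {z η : X} (hF : DifferentiableAt ℝ F (z, η))
    (w : X) : fderiv ℝ F (z, η) (w, 0) = fderiv ℝ (fun x => F (x, η)) z w := by
  exact congr($((hF.hasFDerivAt.comp z (hasFDerivAt_prodMk_left (𝕜 := ℝ) z η)).fderiv) w).symm

lemma fderiv_prodMk_right_apply {F : X × X → ℝ} {z η : X} (hF : DifferentiableAt ℝ F (z, η))
    (v : X) : fderiv ℝ F (z, η) (0, v) = fderiv ℝ (fun y => F (z, y)) η v := by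
  exact congr($((hF.hasFDerivAt.comp η (hasFDerivAt_prodMk_right (𝕜 := ℝ) z η)).fderiv) v).symm

variable {g : X → X →L[ℝ] X →L[ℝ] ℝ} {Γ : X → X →L[ℝ] X →L[ℝ] X} {U V : Set X} {φ : X → Y}
  {ψ : Y → X} {x y z η : X}

namespace IsRiemannianOn

lemma contDiffOn_finslerOfMetric (hg : IsRiemannianOn g U) :
    ContDiffOn ℝ ∞ (finslerOfMetric g) {p | p.1 ∈ U ∧ p.2 ≠ 0} :=
  (((hg.contDiffOn.comp contDiff_fst.contDiffOn fun _ hp => hp.1).clm_apply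
    contDiff_snd.contDiffOn).clm_apply contDiff_snd.contDiffOn).sqrt
    fun p hp => (hg.pos p.1 hp.1 p.2 hp.2).ne'

lemma contDiffAt_finslerOfMetric (hg : IsRiemannianOn g U) (hz : z ∈ U) (hη : η ≠ 0) :
    ContDiffAt ℝ ∞ (finslerOfMetric g) (z, η) :=
  hg.contDiffOn_finslerOfMetric.contDiffAt
    ((isOpen_setOf_fst_mem_and_snd_ne_zero hg.isOpen).mem_nhds ⟨hz, hη⟩)

lemma fderiv_finslerOfMetric_apply (hg : IsRiemannianOn g U) (hz : z ∈ U) (hη : η ≠ 0) (v : X) :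
    fderiv ℝ (finslerOfMetric g) (z, η) (0, v) = g z v η / √(g z η η) := by
  have hF := (hg.contDiffAt_finslerOfMetric hz hη).differentiableAt (by simp)
  have hQ : HasFDerivAt (fun y => g z y y) (g z η + (g z).flip η) η := by
    simpa [add_comm] using (g z).hasFDerivAt.clm_apply (hasFDerivAt_id η)
  rw [fderiv_prodMk_right_apply hF]
  refine congr($((hQ.sqrt (hg.pos z hz η hη).ne').fderiv) v).trans ?_
  simp only [smul_apply, add_apply, ContinuousLinearMap.flip_apply, smul_eq_mul, hg.symm z hz η v]
  ring

lemma fderiv_fderiv_finslerOfMetric_apply (hg : IsRiemannianOn g U) (hz : z ∈ U) (hη : η ≠ 0)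
    (w v : X) : fderiv ℝ (fderiv ℝ (finslerOfMetric g)) (z, η) (w, 0) (0, v) =
      fderiv ℝ g z w v η / √(g z η η) -
        g z v η * fderiv ℝ g z w η η / (2 * √(g z η η) ^ 3) := by
  have hpos : 0 < √(g z η η) := Real.sqrt_pos.2 (hg.pos z hz η hη)
  have hdF : DifferentiableAt ℝ (fderiv ℝ (finslerOfMetric g)) (z, η) :=
    ((hg.contDiffAt_finslerOfMetric hz hη).fderiv_right (m := ∞) (by simp)).differentiableAt
      (by simp)
  have hdF_near : (fun x => fderiv ℝ (finslerOfMetric g) (x, η) (0, v)) =ᶠ[𝓝 z]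
      fun x => g x v η * (√(g x η η))⁻¹ :=
    mem_of_superset (hg.isOpen.mem_nhds hz) fun x hx => hg.fderiv_finslerOfMetric_apply hx hη v
  have hdg : ∀ u, HasFDerivAt (fun x => g x u η) (((fderiv ℝ g z).flip u).flip η) z := fun u => by
    simpa using ((hg.differentiableAt hz).hasFDerivAt.clm_apply
      (hasFDerivAt_const u z)).clm_apply (hasFDerivAt_const η z)
  have hderiv := (hdg v).mul ((hasDerivAt_inv hpos.ne').comp_hasFDerivAt z
    ((hdg η).sqrt (hg.pos z hz η hη).ne'))
  rw [← fderiv_clm_apply_const_apply hdF,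
    fderiv_prodMk_left_apply (hdF.clm_apply (differentiableAt_const _)), hdF_near.fderiv_eq]
  refine congr($(hderiv.fderiv) w).trans ?_
  simp only [smul_apply, add_apply, ContinuousLinearMap.flip_apply, smul_eq_mul,
    Function.comp_apply]
  field_simp
  ring

lemma hamelAt_finslerOfMetric_iff (hg : IsRiemannianOn g U) (hz : z ∈ U) (hη : η ≠ 0) :
    HamelAt (finslerOfMetric g) (z, η) ↔
      ∃ s : ℝ, ∀ v, fderiv ℝ g z η v η - 1 / 2 * fderiv ℝ g z v η η = s * g z v η := by
  have hpos : 0 < √(g z η η) := Real.sqrt_pos.2 (hg.pos z hz η hη)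
  have hsq : g z η η = √(g z η η) ^ 2 := (Real.sq_sqrt (hg.pos z hz η hη).le).symm
  simp only [HamelAt, hg.fderiv_fderiv_finslerOfMetric_apply hz hη]
  generalize √(g z η η) = r at hpos hsq
  refine ⟨fun h => ⟨fderiv ℝ g z η η η / (2 * r ^ 2), fun v => ?_⟩, fun ⟨s, hs⟩ v => ?_⟩
  · have hv := h v
    rw [hsq] at hv
    field_simp at hv ⊢
    linear_combination hv
  · have hη := hs η
    rw [hsq] at hη ⊢
    field_simp
    linear_combination 2 * r ^ 2 * hs v - 2 * g z v η * hη

end IsRiemannianOn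

lemma fderiv_pullbackMetric_apply {G : Y → Y →L[ℝ] Y →L[ℝ] ℝ} (hφ : ContDiffAt ℝ 2 φ x)
    (hG : DifferentiableAt ℝ G (φ x)) (w u v : X) :
    fderiv ℝ (pullbackMetric φ G) x w u v =
      fderiv ℝ G (φ x) (fderiv ℝ φ x w) (fderiv ℝ φ x u) (fderiv ℝ φ x v) +
        G (φ x) (fderiv ℝ (fderiv ℝ φ) x w u) (fderiv ℝ φ x v) +
        G (φ x) (fderiv ℝ φ x u) (fderiv ℝ (fderiv ℝ φ) x w v) := by
  have hdφ := hφ.differentiableAt (by simp)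
  have hdDφ := (hφ.fderiv_right (m := 1) (by norm_num)).differentiableAt (by simp)
  have hdGφ : DifferentiableAt ℝ (fun y => G (φ y)) x := hG.comp x hdφ
  have hfderiv : fderiv ℝ (fun y => G (φ y)) x = fderiv ℝ G (φ x) ∘L fderiv ℝ φ x :=
    fderiv_comp x hG hdφ
  have hd : DifferentiableAt ℝ (pullbackMetric φ G) x :=
    (ContinuousLinearMap.flipₗᵢ ℝ X X ℝ).differentiableAt.comp x
      (((ContinuousLinearMap.flipₗᵢ ℝ X Y ℝ).differentiableAt.comp x
        (hdGφ.clm_comp hdDφ)).clm_comp hdDφ)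
  rw [← fderiv_clm_apply_const_const_apply hd]
  simp only [pullbackMetric_apply]
  rw [fderiv_clm_apply_apply (A := fun y => G (φ y) (fderiv ℝ φ y u)) (by fun_prop) (by fun_prop),
    fderiv_clm_apply_apply hdGφ (by fun_prop), fderiv_clm_apply_const_apply hdDφ,
    fderiv_clm_apply_const_apply hdDφ, hfderiv]
  rfl

namespace IsSmoothChartOn

lemma pullbackMetric_symm_apply (hφ : IsSmoothChartOn φ ψ V) (hx : x ∈ V) (u v : X) :
    pullbackMetric ψ g (φ x) (fderiv ℝ φ x u) (fderiv ℝ φ x v) = g x u v := by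
  rw [pullbackMetric_apply, hφ.leftInvOn hx, hφ.fderiv_symm_fderiv hx, hφ.fderiv_symm_fderiv hx]

lemma isRiemannianOn_pullbackMetric_symm (hφ : IsSmoothChartOn φ ψ V) (hg : IsRiemannianOn g V) :
    IsRiemannianOn (pullbackMetric ψ g) (φ '' V) where
  isOpen := hφ.isOpen_image
  contDiffOn := by
    have hgψ := hg.contDiffOn.comp hφ.contDiffOn_symm (hφ.leftInvOn.mapsTo (surjOn_image φ V))
    have hDψ := hφ.contDiffOn_fderiv_symm
    exact ((ContinuousLinearMap.flipₗᵢ ℝ Y Y ℝ).contDiff.comp_contDiffOn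
      (((ContinuousLinearMap.flipₗᵢ ℝ Y X ℝ).contDiff.comp_contDiffOn
        (hgψ.clm_comp hDψ)).clm_comp hDψ))
  symm := by
    rintro _ ⟨x, hx, rfl⟩ u v
    simp only [pullbackMetric_apply, hφ.leftInvOn hx]
    exact hg.symm x hx _ _
  pos := by
    rintro _ ⟨x, hx, rfl⟩ v hv
    rw [← hφ.fderiv_fderiv_symm hx v] at hv ⊢
    rw [hφ.pullbackMetric_symm_apply hx]
    exact hg.pos x hx _ fun h => hv (by rw [h, map_zero])

/-- The left-hand side is the covector of the geodesic equation in the chart. -/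
lemma fderiv_pullbackMetric_symm_sub (hφ : IsSmoothChartOn φ ψ V) (hΓ : IsLeviCivitaOn g Γ V)
    (hx : x ∈ V) (y w : X) :
    fderiv ℝ (pullbackMetric ψ g) (φ x) (fderiv ℝ φ x y) (fderiv ℝ φ x w) (fderiv ℝ φ x y) -
        1 / 2 * fderiv ℝ (pullbackMetric ψ g) (φ x) (fderiv ℝ φ x w) (fderiv ℝ φ x y)
          (fderiv ℝ φ x y) =
      pullbackMetric ψ g (φ x) (fderiv ℝ φ x w)
        (fderiv ℝ φ x (Γ x y y) - fderiv ℝ (fderiv ℝ φ) x y y) := by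
  have hG := hφ.isRiemannianOn_pullbackMetric_symm hΓ.toIsRiemannianOn
  have hφ2 : ContDiffAt ℝ 2 φ x := (hφ.contDiffAt hx).of_le ENat.LEInfty.out
  have hz := mem_image_of_mem φ hx
  have hDg : ∀ w u v, g x (Γ x w u) v + g x u (Γ x w v) =
      fderiv ℝ (pullbackMetric φ (pullbackMetric ψ g)) x w u v := fun w u v => by
    have hgG : g =ᶠ[𝓝 x] pullbackMetric φ (pullbackMetric ψ g) := by
      filter_upwards [hφ.isOpen.mem_nhds hx] with y hy
      ext u v
      exact (hφ.pullbackMetric_symm_apply hy u v).symm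
    rw [← hΓ.fderiv_metric x hx, hgG.fderiv_eq]
  have hyw := hDg y w y
  have hwy := hDg w y y
  simp only [fderiv_pullbackMetric_apply hφ2 (hG.differentiableAt hz),
    ← hφ.pullbackMetric_symm_apply (g := g) hx] at hyw hwy
  rw [fderiv_fderiv_comm hφ2 y w, hΓ.conn_symm x hx y w] at hyw
  rw [hG.symm _ hz (fderiv ℝ φ x y), hG.symm _ hz (fderiv ℝ φ x y) (fderiv ℝ (fderiv ℝ φ) x w y)]
    at hwy
  rw [map_sub]
  linear_combination 1 / 2 * hwy - hyw

lemma hamelAt_iff (hφ : IsSmoothChartOn φ ψ V) (hΓ : IsLeviCivitaOn g Γ V) (hx : x ∈ V)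
    (hy : y ≠ 0) :
    HamelAt (finslerOfMetric (pullbackMetric ψ g)) (φ x, fderiv ℝ φ x y) ↔ ∃ s : ℝ,
      fderiv ℝ (fderiv ℝ φ) x y y = fderiv ℝ φ x (Γ x y y) + s • fderiv ℝ φ x y := by
  have hG := hφ.isRiemannianOn_pullbackMetric_symm hΓ.toIsRiemannianOn
  have hz := mem_image_of_mem φ hx
  rw [hG.hamelAt_finslerOfMetric_iff hz ((map_ne_zero_iff _ (hφ.injective_fderiv hx)).2 hy),
    ← Equiv.exists_congr_right (Equiv.neg ℝ)]
  refine exists_congr fun s => ?_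
  rw [(hφ.surjective_fderiv hx).forall]
  simp only [hφ.fderiv_pullbackMetric_symm_sub hΓ hx, Equiv.neg_apply]
  refine ⟨fun h => ?_, fun h w => by simp [h]⟩
  have hzero := hG.eq_zero_of_forall hz
    (u := fderiv ℝ φ x (Γ x y y) - fderiv ℝ (fderiv ℝ φ) x y y + s • fderiv ℝ φ x y) <|
    (hφ.surjective_fderiv hx).forall.2 fun w => by
      rw [hG.symm _ hz, map_add, h w, map_smul, smul_eq_mul]
      ring
  linear_combination (norm := module) -hzero

theorem forall_hamelAt_iff_flattensGeodesicsOn (hφ : IsSmoothChartOn φ ψ V)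
    (hΓ : IsLeviCivitaOn g Γ V) {F : Y × Y → ℝ}
    (hF : ∀ x ∈ V, ∀ y, F (φ x, fderiv ℝ φ x y) = finslerOfMetric g (x, y)) :
    (∀ z ∈ φ '' V, ∀ η ≠ 0, HamelAt F (z, η)) ↔ FlattensGeodesicsOn φ Γ V := by
  have hG := hφ.isRiemannianOn_pullbackMetric_symm hΓ.toIsRiemannianOn
  have hF_eq : EqOn F (finslerOfMetric (pullbackMetric ψ g)) {p | p.1 ∈ φ '' V ∧ p.2 ≠ 0} := by
    rintro ⟨_, η⟩ ⟨⟨x, hx, rfl⟩, -⟩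
    obtain ⟨y, rfl⟩ := hφ.surjective_fderiv hx η
    rw [hF x hx, finslerOfMetric, finslerOfMetric, hφ.pullbackMetric_symm_apply hx]
  rw [forall_mem_image]
  refine forall₂_congr fun x hx => ?_
  rw [(hφ.surjective_fderiv hx).forall]
  refine forall_congr' fun y => ?_
  rcases eq_or_ne y 0 with rfl | hy
  · simp
  have hη : fderiv ℝ φ x y ≠ 0 := (map_ne_zero_iff _ (hφ.injective_fderiv hx)).2 hy
  have hF_near : F =ᶠ[𝓝 (φ x, fderiv ℝ φ x y)] finslerOfMetric (pullbackMetric ψ g) :=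
    hF_eq.eventuallyEq_of_mem
      ((isOpen_setOf_fst_mem_and_snd_ne_zero hG.isOpen).mem_nhds ⟨mem_image_of_mem φ hx, hη⟩)
  rw [← hφ.hamelAt_iff hΓ hx hy, HamelAt, HamelAt, hF_near.fderiv.fderiv_eq]
  exact forall_prop_of_true hη

end IsSmoothChartOn

end Hamel

section Coordinates

variable {n : ℕ} {T : Type*} [NormedAddCommGroup T] [NormedSpace ℝ T]

lemma clm_ext_single {A B : E n →L[ℝ] T} (h : ∀ i, A (Pi.single i 1) = B (Pi.single i 1)) :
    A = B :=
  ContinuousLinearMap.coe_injective <| LinearMap.pi_ext' fun i => LinearMap.ext_ring (h i)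

lemma sum_smul_clm_single (A : E n →L[ℝ] T) (v : E n) :
    ∑ i, v i • A (Pi.single i 1) = A v := by
  conv_rhs => rw [pi_eq_sum_univ' v]
  simp only [map_sum, map_smul]

/-- The continuous bilinear map on `E n` whose components are the entries of `M`. -/
def bilinearOfMatrix (M : Matrix (Fin n) (Fin n) T) : E n →L[ℝ] E n →L[ℝ] T :=
  (Matrix.toLinearMap₂' ℝ M).toContinuousBilinearMap

lemma bilinearOfMatrix_apply (M : Matrix (Fin n) (Fin n) T) (u v : E n) :
    bilinearOfMatrix M u v = ∑ i, ∑ j, u i • v j • M i j :=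
  Matrix.toLinearMap₂'_apply M u v

lemma bilinearOfMatrix_single (M : Matrix (Fin n) (Fin n) T) (i j : Fin n) :
    bilinearOfMatrix M (Pi.single i 1) (Pi.single j 1) = M i j := by
  simp [bilinearOfMatrix_apply, Pi.single_apply]

lemma contDiffOn_bilinearOfMatrix {M : E n → Matrix (Fin n) (Fin n) T} {U : Set (E n)}
    (hM : ∀ i j, ContDiffOn ℝ ∞ (fun x => M x i j) U) :
    ContDiffOn ℝ ∞ (fun x => bilinearOfMatrix (M x)) U := by
  refine contDiffOn_clm_apply.2 fun u => contDiffOn_clm_apply.2 fun v => ?_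
  simp only [bilinearOfMatrix_apply]
  exact ContDiffOn.sum fun i _ => ContDiffOn.sum fun j _ =>
    ((hM i j).const_smul (v j)).const_smul (u i)

/-- The curvature operator `(u, v, w) ↦ G(v, w) u - G(u, w) v` of constant sectional curvature one
for the inner product `G`. -/
def unitCurvature (G : E n →L[ℝ] E n →L[ℝ] ℝ) : E n →L[ℝ] E n →L[ℝ] E n →L[ℝ] E n :=
  let B := (ContinuousLinearMap.smulRightL ℝ (E n) (E n) ∘L G).flip
  B - B.flip

lemma unitCurvature_apply (G : E n →L[ℝ] E n →L[ℝ] ℝ) (u v w : E n) :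
    unitCurvature G u v w = G v w • u - G u w • v := rfl

/-- The metric with components `g i j`, as a field of bilinear forms. -/
def metricForm (g : E n → Matrix (Fin n) (Fin n) ℝ) (x : E n) : E n →L[ℝ] E n →L[ℝ] ℝ :=
  bilinearOfMatrix (g x)

/-- The Levi-Civita connection of the metric with components `g i j`, as a field of bilinear
maps with components the Christoffel symbols. -/
def christoffelForm (g : E n → Matrix (Fin n) (Fin n) ℝ) (x : E n) : E n →L[ℝ] E n →L[ℝ] E n :=
  bilinearOfMatrix (Matrix.of fun j k i => Christoffel g i j k x)

lemma metricForm_single (g : E n → Matrix (Fin n) (Fin n) ℝ) (x : E n) (i j : Fin n) :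
    metricForm g x (Pi.single i 1) (Pi.single j 1) = g x i j :=
  bilinearOfMatrix_single _ _ _

lemma metricForm_single_left (g : E n → Matrix (Fin n) (Fin n) ℝ) (x : E n) (i : Fin n)
    (v : E n) : metricForm g x (Pi.single i 1) v = ∑ m, g x i m * v m := by
  simp only [← sum_smul_clm_single _ v, metricForm_single, smul_eq_mul, mul_comm]

lemma christoffelForm_single (g : E n → Matrix (Fin n) (Fin n) ℝ) (x : E n) (i j k : Fin n) :
    christoffelForm g x (Pi.single j 1) (Pi.single k 1) i = Christoffel g i j k x :=
  congrFun (bilinearOfMatrix_single _ _ _) i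

lemma finslerOfMetric_metricForm (g : E n → Matrix (Fin n) (Fin n) ℝ) :
    finslerOfMetric (metricForm g) = fun p => √(∑ i, ∑ j, g p.1 i j * p.2 i * p.2 j) := by
  ext p
  simp only [finslerOfMetric, metricForm, bilinearOfMatrix_apply, smul_eq_mul]
  congr! 3 with i _ j _
  ring

variable {g : E n → Matrix (Fin n) (Fin n) ℝ} {U : Set (E n)} {x : E n}

lemma isRiemannianOn_metricForm (hU : IsOpen U)
    (hg : ∀ i j, ContDiffOn ℝ ∞ (fun x => g x i j) U) (hpos : ∀ x ∈ U, (g x).PosDef) :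
    IsRiemannianOn (metricForm g) U where
  isOpen := hU
  contDiffOn := contDiffOn_bilinearOfMatrix hg
  symm x hx u v := by
    have hflip : metricForm g x = (metricForm g x).flip :=
      clm_ext_single fun i => clm_ext_single fun j => by
        simpa only [ContinuousLinearMap.flip_apply, metricForm_single, star_trivial] using
          ((hpos x hx).isHermitian.apply i j).symm
    exact congr($hflip u v)
  pos x hx v hv := by
    have := (hpos x hx).dotProduct_mulVec_pos hv
    rwa [star_trivial, ← Matrix.toLinearMap₂'_apply'] at this

namespace IsRiemannianOn

lemma components_symm (hg : IsRiemannianOn (metricForm g) U) (hx : x ∈ U) (i j : Fin n) :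
    g x i j = g x j i := by
  simpa only [metricForm_single] using hg.symm x hx (Pi.single i 1) (Pi.single j 1)

lemma contDiffOn_components (hg : IsRiemannianOn (metricForm g) U) (i j : Fin n) :
    ContDiffOn ℝ ∞ (fun x => g x i j) U := by
  simpa only [metricForm_single] using
    (hg.contDiffOn.clm_apply (contDiffOn_const (c := Pi.single i 1))).clm_apply
      (contDiffOn_const (c := Pi.single j 1))

lemma posDef (hg : IsRiemannianOn (metricForm g) U) (hx : x ∈ U) : (g x).PosDef :=
  .of_dotProduct_mulVec_pos (Matrix.IsHermitian.ext fun i j => hg.components_symm hx j i)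
    fun v hv => by
      rw [star_trivial, ← Matrix.toLinearMap₂'_apply']
      exact hg.pos x hx v hv

lemma pd_components (hg : IsRiemannianOn (metricForm g) U) (hx : x ∈ U) (i j k : Fin n) :
    pd k (fun x' => g x' i j) x =
      fderiv ℝ (metricForm g) x (Pi.single k 1) (Pi.single i 1) (Pi.single j 1) := by
  simp only [pd, ← metricForm_single g,
    fderiv_clm_apply_const_const_apply (hg.differentiableAt hx)]

lemma pd_components_symm (hg : IsRiemannianOn (metricForm g) U) (hx : x ∈ U) (i j k : Fin n) :
    pd k (fun x' => g x' i j) x = pd k (fun x' => g x' j i) x := by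
  have hsymm : (fun x' => g x' i j) =ᶠ[𝓝 x] fun x' => g x' j i :=
    mem_of_superset (hg.isOpen.mem_nhds hx) fun y hy => hg.components_symm hy i j
  rw [pd, pd, hsymm.fderiv_eq]

lemma contDiffOn_inv_components (hg : IsRiemannianOn (metricForm g) U) (i j : Fin n) :
    ContDiffOn ℝ ∞ (fun x => (g x)⁻¹ i j) U := by
  have hdet : ∀ h : E n → Matrix (Fin n) (Fin n) ℝ,
      (∀ i j, ContDiffOn ℝ ∞ (fun x => h x i j) U) → ContDiffOn ℝ ∞ (fun x => (h x).det) U :=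
    fun h hh => by
      simp only [Matrix.det_apply']
      exact ContDiffOn.sum fun σ _ => contDiffOn_const.mul (contDiffOn_prod fun i _ => hh _ _)
  simp only [Matrix.inv_def, Ring.inverse_eq_inv', Matrix.smul_apply, smul_eq_mul,
    Matrix.adjugate_apply]
  refine ((hdet g hg.contDiffOn_components).inv fun x hx => (hg.posDef hx).det_pos.ne').mul
    (hdet _ fun a b => ?_)
  simp only [Matrix.updateRow_apply]
  split_ifs
  · exact contDiffOn_const
  · exact hg.contDiffOn_components a b

lemma contDiffOn_christoffel (hg : IsRiemannianOn (metricForm g) U) (i j k : Fin n) :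
    ContDiffOn ℝ ∞ (Christoffel g i j k) U := by
  have hpd : ∀ i j k, ContDiffOn ℝ ∞ (pd k fun x' => g x' i j) U := fun i j k =>
    ((hg.contDiffOn_components i j).fderiv_of_isOpen hg.isOpen (m := ∞) (by simp)).clm_apply
      contDiffOn_const
  exact contDiffOn_const.mul <| ContDiffOn.sum fun l _ => (hg.contDiffOn_inv_components i l).mul <|
    ((hpd l j k).add (hpd l k j)).sub (hpd j k l)

lemma christoffel_symm (hg : IsRiemannianOn (metricForm g) U) (hx : x ∈ U) (i j k : Fin n) :
    Christoffel g i j k x = Christoffel g i k j x := by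
  simp only [Christoffel, hg.pd_components_symm hx j k]
  congr! 4
  exact add_comm _ _

lemma contDiffOn_christoffelForm (hg : IsRiemannianOn (metricForm g) U) :
    ContDiffOn ℝ ∞ (christoffelForm g) U :=
  contDiffOn_bilinearOfMatrix fun j k => contDiffOn_pi.2 fun i => hg.contDiffOn_christoffel i j k

lemma pd_christoffel (hg : IsRiemannianOn (metricForm g) U) (hx : x ∈ U) (i j k l : Fin n) :
    pd l (Christoffel g i j k) x =
      fderiv ℝ (christoffelForm g) x (Pi.single l 1) (Pi.single j 1) (Pi.single k 1) i := by
  have hd : DifferentiableAt ℝ (christoffelForm g) x :=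
    (hg.contDiffOn_christoffelForm.contDiffAt (hg.isOpen.mem_nhds hx)).differentiableAt (by simp)
  have hcomp : Christoffel g i j k = fun y =>
      christoffelForm g y (Pi.single j 1) (Pi.single k 1) i :=
    funext fun y => (christoffelForm_single g y i j k).symm
  have hd_jk : DifferentiableAt ℝ
      (fun y => christoffelForm g y (Pi.single j 1) (Pi.single k 1)) x := by fun_prop
  rw [← fderiv_clm_apply_const_const_apply hd, pd, hcomp, fderiv_apply hd_jk]
  rfl

lemma metricForm_christoffelForm (hg : IsRiemannianOn (metricForm g) U) (hx : x ∈ U)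
    (l j k : Fin n) :
    metricForm g x (Pi.single l 1) (christoffelForm g x (Pi.single j 1) (Pi.single k 1)) =
      1 / 2 * (pd k (fun x' => g x' l j) x + pd j (fun x' => g x' l k) x -
        pd l (fun x' => g x' j k) x) := by
  let w : E n := fun l => 1 / 2 * (pd k (fun x' => g x' l j) x + pd j (fun x' => g x' l k) x -
    pd l (fun x' => g x' j k) x)
  have hΓ : christoffelForm g x (Pi.single j 1) (Pi.single k 1) = (g x)⁻¹.mulVec w := by
    ext i
    rw [christoffelForm_single, Christoffel, Finset.mul_sum]
    exact Finset.sum_congr rfl fun l _ => mul_left_comm _ _ _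
  rw [metricForm_single_left, hΓ]
  change ((g x).mulVec ((g x)⁻¹.mulVec w)) l = w l
  rw [Matrix.mulVec_mulVec, Matrix.mul_nonsing_inv _ (hg.posDef hx).det_pos.ne'.isUnit,
    Matrix.one_mulVec]

theorem isLeviCivitaOn_christoffelForm (hg : IsRiemannianOn (metricForm g) U) :
    IsLeviCivitaOn (metricForm g) (christoffelForm g) U where
  toIsRiemannianOn := hg
  contDiffOn_conn := hg.contDiffOn_christoffelForm
  conn_symm x hx u v := by
    have hflip : christoffelForm g x = (christoffelForm g x).flip :=
      clm_ext_single fun j => clm_ext_single fun k => by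
        ext i
        simpa only [ContinuousLinearMap.flip_apply, christoffelForm_single] using
          hg.christoffel_symm hx i j k
    exact congr($hflip u v)
  fderiv_metric x hx w u v := by
    let gΓ : E n →L[ℝ] E n →L[ℝ] E n →L[ℝ] ℝ :=
      ContinuousLinearMap.compL ℝ (E n) (E n) (E n →L[ℝ] ℝ) (metricForm g x) ∘L
        christoffelForm g x
    have hparallel : fderiv ℝ (metricForm g) x =
        gΓ + (ContinuousLinearMap.flipₗᵢ ℝ (E n) (E n) ℝ).toContinuousLinearEquiv ∘L gΓ := by
      refine clm_ext_single fun k => clm_ext_single fun i => clm_ext_single fun j => ?_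
      change _ = metricForm g x (christoffelForm g x (Pi.single k 1) (Pi.single i 1)) _ +
        metricForm g x (christoffelForm g x (Pi.single k 1) (Pi.single j 1)) _
      rw [← hg.pd_components hx, hg.symm x hx _ (Pi.single j 1), hg.symm x hx _ (Pi.single i 1),
        hg.metricForm_christoffelForm hx, hg.metricForm_christoffelForm hx,
        hg.pd_components_symm hx j i, hg.pd_components_symm hx j k, hg.pd_components_symm hx i k]
      ring
    rw [hg.symm x hx u]
    exact congr($hparallel w u v)

lemma riemLow_eq (hg : IsRiemannianOn (metricForm g) U) (hx : x ∈ U) (i j k l : Fin n) :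
    RiemLow g i j k l x = metricForm g x (Pi.single i 1)
      (curvature (christoffelForm g) x (Pi.single k 1) (Pi.single l 1) (Pi.single j 1)) := by
  have hsq : ∀ m j k l, ∑ a, Christoffel g m k a x * Christoffel g a l j x = christoffelForm g x
      (Pi.single k 1) (christoffelForm g x (Pi.single l 1) (Pi.single j 1)) m := fun m j k l => by
    rw [← sum_smul_clm_single, Finset.sum_apply]
    simp only [Pi.smul_apply, christoffelForm_single, smul_eq_mul, mul_comm]
  simp only [RiemLow, RiemUp, metricForm_single_left, curvature_apply, Finset.sum_sub_distrib, hsq,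
    hg.pd_christoffel hx, Pi.add_apply, Pi.sub_apply]
  congr! 2
  ring

lemma eq_of_forall_metricForm_single (hg : IsRiemannianOn (metricForm g) U) (hx : x ∈ U) {u v : E n}
    (h : ∀ i, metricForm g x (Pi.single i 1) u = metricForm g x (Pi.single i 1) v) : u = v := by
  have huv : metricForm g x u = metricForm g x v := clm_ext_single fun i => by
    rw [hg.symm x hx u, hg.symm x hx v, h]
  exact sub_eq_zero.1 <| hg.eq_zero_of_forall hx fun w => by
    rw [map_sub, huv, sub_self, zero_apply]

theorem forall_riemLow_eq_iff (hg : IsRiemannianOn (metricForm g) U) (hx : x ∈ U) (c : ℝ) :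
    (∀ i j k l, RiemLow g i j k l x = c * (g x i k * g x j l - g x i l * g x j k)) ↔
      HasConstantCurvatureAt (metricForm g) (christoffelForm g) x c := by
  simp only [hg.riemLow_eq hx]
  refine ⟨fun h u v w => ?_, fun h i j k l => ?_⟩
  · have hcurv : curvature (christoffelForm g) x = c • unitCurvature (metricForm g x) :=
      clm_ext_single fun k => clm_ext_single fun l => clm_ext_single fun j =>
        hg.eq_of_forall_metricForm_single hx fun i => by
          simp only [h, smul_apply, unitCurvature_apply, map_smul, map_sub, metricForm_single,
            smul_eq_mul, hg.components_symm hx l j, hg.components_symm hx k j]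
          ring
    simp only [hcurv, smul_apply, unitCurvature_apply]
  · rw [h]
    simp only [map_smul, map_sub, metricForm_single, smul_eq_mul, hg.components_symm hx l j,
      hg.components_symm hx k j]
    ring

end IsRiemannianOn

lemma pdx_pdy_apply {F : E n × E n → ℝ} {p : E n × E n} (hF : ContDiffAt ℝ 2 F p) (k i : Fin n) :
    pdx k (pdy i F) p =
      fderiv ℝ (fderiv ℝ F) p (Pi.single k 1, 0) (0, Pi.single i 1) :=
  fderiv_clm_apply_const_apply
    ((hF.fderiv_right (m := 1) (by norm_num)).differentiableAt (by simp)) _ _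

theorem forall_sum_pdx_pdy_eq_iff_hamelAt {F : E n × E n → ℝ} {x y : E n}
    (hF : ContDiffAt ℝ 2 F (x, y)) :
    (∀ i, ∑ k, pdx k (pdy i F) (x, y) * y k = ∑ k, pdx i (pdy k F) (x, y) * y k) ↔
      HamelAt F (x, y) := by
  let D := fderiv ℝ (fderiv ℝ F) (x, y)
  let L := D (y, 0) ∘L .inr ℝ (E n) (E n)
  let R := D.flip (0, y) ∘L .inl ℝ (E n) (E n)
  have hL : ∀ i, ∑ k, pdx k (pdy i F) (x, y) * y k = L (Pi.single i 1) := fun i => by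
    simp only [pdx_pdy_apply hF, mul_comm _ (y _)]
    exact sum_smul_clm_single (D.flip (0, Pi.single i 1) ∘L .inl ℝ (E n) (E n)) y
  have hR : ∀ i, ∑ k, pdx i (pdy k F) (x, y) * y k = R (Pi.single i 1) := fun i => by
    simp only [pdx_pdy_apply hF, mul_comm _ (y _)]
    exact sum_smul_clm_single (D (Pi.single i 1, 0) ∘L .inr ℝ (E n) (E n)) y
  simp only [hL, hR]
  exact ⟨fun h v => congr($(clm_ext_single h) v), fun h i => h _⟩

theorem forall_mem_sum_pdx_pdy_eq_iff_hamelAt {F : E n × E n → ℝ} {W : Set (E n)} (hW : IsOpen W)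
    (hF : ContDiffOn ℝ ∞ F {p | p.1 ∈ W ∧ p.2 ≠ 0}) :
    (∀ z ∈ W, ∀ η : E n, η ≠ 0 → ∀ i,
      ∑ k, pdx k (pdy i F) (z, η) * η k = ∑ k, pdx i (pdy k F) (z, η) * η k) ↔
      ∀ z ∈ W, ∀ η ≠ 0, HamelAt F (z, η) :=
  forall₂_congr fun _ hz => forall₂_congr fun _ hη => forall_sum_pdx_pdy_eq_iff_hamelAt <|
    (hF.contDiffAt ((isOpen_setOf_fst_mem_and_snd_ne_zero hW).mem_nhds ⟨hz, hη⟩)).of_le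
      ENat.LEInfty.out

end Coordinates

section ConstantCurvature

variable {X : Type*} [NormedAddCommGroup X] [NormedSpace ℝ X]
  {g : X → X →L[ℝ] X →L[ℝ] ℝ} {Γ : X → X →L[ℝ] X →L[ℝ] X} {U : Set X} {x : X}
  {c c' : ℝ}

lemma HasConstantCurvatureAt.unique (hc : HasConstantCurvatureAt g Γ x c)
    (hc' : HasConstantCurvatureAt g Γ x c') (hg : IsRiemannianOn g U) (hx : x ∈ U)
    (hdim : 1 < Module.finrank ℝ X) : c = c' := by
  have : Nontrivial X := Module.nontrivial_of_finrank_pos (zero_lt_one.trans hdim)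
  obtain ⟨u, hu⟩ := exists_ne (0 : X)
  obtain ⟨v, huv⟩ := exists_linearIndependent_pair_of_one_lt_finrank hdim hu
  refine smul_left_injective ℝ (fun hw => ?_) ((hc v u u).symm.trans (hc' v u u))
  have hguu := (LinearIndependent.pair_iff.1 huv (-g x v u) (g x u u)
    (by linear_combination (norm := module) hw)).2
  exact (hg.pos x hx u hu).ne' hguu

lemma IsRiemannianOn.exists_forall_hasConstantCurvatureAt (hg : IsRiemannianOn g U)
    (hU : IsPreconnected U) (hdim : 1 < Module.finrank ℝ X)
    (hloc : ∀ x ∈ U, ∃ c, ∀ᶠ y in 𝓝 x, HasConstantCurvatureAt g Γ y c) :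
    ∃ c, ∀ x ∈ U, HasConstantCurvatureAt g Γ x c := by
  choose! κ hκ using hloc
  have hκ_near : ∀ x ∈ U, κ =ᶠ[𝓝 x] fun _ => κ x := fun x hx => by
    filter_upwards [hκ x hx, hg.isOpen.mem_nhds hx] with y hy hyU
    exact (hκ y hyU).self_of_nhds.unique hy hg hyU hdim
  obtain ⟨c, hc⟩ := hg.isOpen.exists_is_const_of_fderiv_eq_zero hU (f := κ) (𝕜 := ℝ)
    (fun x hx => ((differentiableAt_const _).congr_of_eventuallyEq
      (hκ_near x hx)).differentiableWithinAt)
    (fun x hx => by rw [(hκ_near x hx).fderiv_eq, fderiv_const_apply, Pi.zero_apply])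
  exact ⟨c, fun x hx => hc x hx ▸ (hκ x hx).self_of_nhds⟩

theorem IsLeviCivitaOn.exists_forall_hasConstantCurvatureAt_iff [FiniteDimensional ℝ X]
    (hΓ : IsLeviCivitaOn g Γ U) (hU : IsPreconnected U) (hdim : 1 < Module.finrank ℝ X) :
    (∃ c, ∀ x ∈ U, HasConstantCurvatureAt g Γ x c) ↔ ∀ x₀ ∈ U, ∃ (V : Set X) (φ ψ : X → X),
      x₀ ∈ V ∧ V ⊆ U ∧ IsSmoothChartOn φ ψ V ∧ FlattensGeodesicsOn φ Γ V := by
  refine ⟨fun ⟨c, hc⟩ x₀ hx₀ => ?_, fun h => ?_⟩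
  · obtain ⟨φ, ψ, V, hVU, hx₀V, hφ, hflat⟩ :=
      exists_isSmoothChartOn_flattensGeodesicsOn hΓ hc hx₀
    exact ⟨V, φ, ψ, hx₀V, hVU, hφ, hflat⟩
  · refine hΓ.exists_forall_hasConstantCurvatureAt hU hdim fun x₀ hx₀ => ?_
    obtain ⟨V, φ, ψ, hx₀V, hVU, hφ, hflat⟩ := h x₀ hx₀
    have hΓV := hΓ.mono hφ.isOpen hVU
    obtain ⟨P, hP⟩ := hφ.exists_isFlatteningOn hΓV.contDiffOn_conn hΓV.conn_symm hflat
    exact hP.exists_hasConstantCurvatureAt hΓV hdim hx₀V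

end ConstantCurvature

end Development

/-- a smooth Riemannian metric on a connected open `U ⊆ ℝⁿ` (`n ≥ 2`) has
constant sectional curvature iff around every point there is a smooth diffeomorphism `φ`
such that the expression of the associated Finsler function `F` in the `φ`-coordinates
satisfies the Hamel equations. -/
theorem statement2 {n : ℕ} (hn : 2 ≤ n) (U : Set (E n)) (hUopen : IsOpen U)
    (hUconn : IsConnected U) (g : E n → Matrix (Fin n) (Fin n) ℝ)
    (hgsmooth : ∀ i j : Fin n, ContDiffOn ℝ (⊤ : ℕ∞) (fun x => g x i j) U)
    (hgpos : ∀ x ∈ U, (g x).PosDef)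
    (F : E n × E n → ℝ)
    (hFdef : F = fun p => Real.sqrt (∑ i, ∑ j, g p.1 i j * p.2 i * p.2 j)) :
    (∃ c : ℝ, ∀ x ∈ U, ∀ i j k l : Fin n,
        RiemLow g i j k l x = c * (g x i k * g x j l - g x i l * g x j k)) ↔
    (∀ x₀ ∈ U, ∃ (V : Set (E n)) (φ ψ : E n → E n) (Fb : E n × E n → ℝ),
        IsOpen V ∧ x₀ ∈ V ∧ V ⊆ U ∧
        ContDiffOn ℝ (⊤ : ℕ∞) φ V ∧ IsOpen (φ '' V) ∧ ContDiffOn ℝ (⊤ : ℕ∞) ψ (φ '' V) ∧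
        (∀ x ∈ V, ψ (φ x) = x) ∧
        ContDiffOn ℝ (⊤ : ℕ∞) Fb {p : E n × E n | p.1 ∈ φ '' V ∧ p.2 ≠ 0} ∧
        (∀ x ∈ V, ∀ y : E n, Fb (φ x, fderiv ℝ φ x y) = F (x, y)) ∧
        (∀ xb ∈ φ '' V, ∀ y : E n, y ≠ 0 → ∀ i : Fin n,
          ∑ k, pdx k (pdy i Fb) (xb, y) * y k = ∑ k, pdx i (pdy k Fb) (xb, y) * y k)) := by
  have hR := isRiemannianOn_metricForm hUopen hgsmooth hgpos
  have hΓ := hR.isLeviCivitaOn_christoffelForm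
  have hF : F = finslerOfMetric (metricForm g) := hFdef.trans (finslerOfMetric_metricForm g).symm
  rw [exists_congr fun c => forall₂_congr fun x hx => hR.forall_riemLow_eq_iff hx c,
    hΓ.exists_forall_hasConstantCurvatureAt_iff hUconn.isPreconnected
      (hn.trans_eq (Module.finrank_fin_fun ℝ).symm), hF]
  refine forall₂_congr fun x₀ _ => exists₃_congr fun V φ ψ => ⟨fun ⟨hx₀V, hVU, hφ, hflat⟩ => ?_,
    fun ⟨Fb, hV, hx₀V, hVU, hφ, hW, hψ, hψφ, hFb, hFφ, hHamel⟩ => ?_⟩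
  · have hΓV := hΓ.mono hφ.isOpen hVU
    have hG := hφ.isRiemannianOn_pullbackMetric_symm hΓV.toIsRiemannianOn
    have hFφ : ∀ x ∈ V, ∀ y, finslerOfMetric (pullbackMetric ψ (metricForm g))
        (φ x, fderiv ℝ φ x y) = finslerOfMetric (metricForm g) (x, y) := fun x hx y => by
      rw [finslerOfMetric, finslerOfMetric, hφ.pullbackMetric_symm_apply hx]
    have hHamel := (hφ.forall_hamelAt_iff_flattensGeodesicsOn hΓV hFφ).2 hflat
    exact ⟨_, hφ.isOpen, hx₀V, hVU, hφ.contDiffOn, hφ.isOpen_image, hφ.contDiffOn_symm,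
      hφ.leftInvOn, hG.contDiffOn_finslerOfMetric, hFφ,
      (forall_mem_sum_pdx_pdy_eq_iff_hamelAt hG.isOpen hG.contDiffOn_finslerOfMetric).2 hHamel⟩
  · have hφψ : IsSmoothChartOn φ ψ V := ⟨hV, hφ, hW, hψ, hψφ⟩
    have hHamelAt := (forall_mem_sum_pdx_pdy_eq_iff_hamelAt hW hFb).1 hHamel
    exact ⟨hx₀V, hVU, hφψ,
      (hφψ.forall_hamelAt_iff_flattensGeodesicsOn (hΓ.mono hV hVU) hFφ).1 hHamelAt⟩
end
end
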